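/- Let T > 0, let g satisfy (g1) and lim_{s→0⁺} g(s)/s = 0, and assume that g is continuously differentiable on a right neighborhood [0,ε₀) of s = 0 for some ε₀ > 0. Let a ∈ L¹([0,T]) satisfy (a1) and (a2), and set g_∞ := liminf_{s→+∞} g(s)/s. Assume that for each i = 1,…,m there exist λᵢ with 0 < λᵢ < g_∞ and a C¹ function φᵢ : Iᵢ → ℝ with absolutely continuous derivative, φᵢ > 0 on the interior of Iᵢ, φᵢ = 0 at both endpoints of Iᵢ, and φᵢ'' + λᵢ a(x) φᵢ = 0 a.e. on Iᵢ (i.e., g_∞ > max_i λ₁ⁱ, where λ₁ⁱ is the first eigenvalue of φ'' + λ a(x) φ = 0 with φ = 0 on ∂Iᵢ). Then the equation u'' + a(x) g(u) = 0 has at least one positive solution satisfying the Neumann boundary conditions and at least one positive solution satisfying the periodic boundary conditions. -/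

import Mathlib

open MeasureTheory Set Filter

/-- `u` (with derivative `u'`) is a C¹ solution of `u'' + f(x) = 0` on `[0,T]`:
`u'` is absolutely continuous and the equation holds a.e., expressed via the
integral equation `u'(x) = u'(0) − ∫₀ˣ f(t) dt`. -/
def IsSolOn (T : ℝ) (f : ℝ → ℝ) (u u' : ℝ → ℝ) : Prop :=
  (∀ x ∈ Icc (0:ℝ) T, HasDerivWithinAt u (u' x) (Icc (0:ℝ) T) x) ∧
  ContinuousOn u' (Icc (0:ℝ) T) ∧
  ∀ x ∈ Icc (0:ℝ) T, u' x = u' 0 - ∫ t in (0:ℝ)..x, f t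

/-- The equation `u'' + a(x) g(u) = 0` on `[0,T]` has a positive solution
satisfying the Neumann boundary conditions. -/
def PosSolNeumann (T : ℝ) (a g : ℝ → ℝ) : Prop :=
  ∃ u u' : ℝ → ℝ, IsSolOn T (fun t => a t * g (u t)) u u' ∧
    (∀ x ∈ Icc (0:ℝ) T, 0 < u x) ∧ u' 0 = 0 ∧ u' T = 0

/-- The equation `u'' + a(x) g(u) = 0` on `[0,T]` has a positive solution
satisfying the periodic boundary conditions. -/
def PosSolPeriodic (T : ℝ) (a g : ℝ → ℝ) : Prop :=
  ∃ u u' : ℝ → ℝ, IsSolOn T (fun t => a t * g (u t)) u u' ∧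
    (∀ x ∈ Icc (0:ℝ) T, 0 < u x) ∧ u 0 = u T ∧ u' 0 = u' T

/-- Condition (g1): `g : [0,∞) → [0,∞)` is continuous, `g 0 = 0`, `g > 0` on `(0,∞)`. -/
def CondG1 (g : ℝ → ℝ) : Prop :=
  ContinuousOn g (Ici (0:ℝ)) ∧ (∀ s : ℝ, 0 ≤ s → 0 ≤ g s) ∧ g 0 = 0 ∧
    ∀ s : ℝ, 0 < s → 0 < g s

/-- `g` is regularly oscillating at zero. -/
def RegOscAtZero (g : ℝ → ℝ) : Prop :=
  ∀ ε : ℝ, 0 < ε → ∃ δ > (0:ℝ), ∃ η > (0:ℝ), ∀ s ω : ℝ,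
    0 < s → s < δ → |ω - 1| < η → |g (ω * s) / g s - 1| < ε

/-- `liminf_{s → +∞} g(s)/s`, computed in `EReal`. -/
noncomputable def GrowthLiminf (g : ℝ → ℝ) : EReal :=
  liminf (fun s : ℝ => ((g s / s : ℝ) : EReal)) atTop

/-- `limsup_{s → +∞} g(s)/s`, computed in `EReal`. -/
noncomputable def GrowthLimsup (g : ℝ → ℝ) : EReal :=
  limsup (fun s : ℝ => ((g s / s : ℝ) : EReal)) atTop

/-- `(lam, φ)` is a Dirichlet eigenpair of `φ'' + λ a(x) φ = 0` on `[x₁,x₂]` with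
`φ > 0` in the interior (so `lam` is the first eigenvalue): `φ` is `C¹` with
absolutely continuous derivative, expressed via the integral equation. -/
def DirichletEigenpair (a : ℝ → ℝ) (x₁ x₂ lam : ℝ) : Prop :=
  ∃ φ φ' : ℝ → ℝ,
    (∀ x ∈ Icc x₁ x₂, HasDerivWithinAt φ (φ' x) (Icc x₁ x₂) x) ∧
    ContinuousOn φ' (Icc x₁ x₂) ∧
    (∀ x ∈ Ioo x₁ x₂, 0 < φ x) ∧ φ x₁ = 0 ∧ φ x₂ = 0 ∧
    ∀ x ∈ Icc x₁ x₂, φ' x = φ' x₁ - lam * ∫ t in x₁..x, a t * φ t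

/-- continuous logarithm on the circle -/
def HasLogC (γ : Circle → ℂ) : Prop :=
  ∃ θ : Circle → ℂ, Continuous θ ∧ ∀ z, Complex.exp (θ z) = γ z

lemma hasLogC_of_close {γ δ : Circle → ℂ} (hγ : HasLogC γ) (cγ : Continuous γ) (cδ : Continuous δ)
    (h : ∀ z, ‖δ z - γ z‖ < ‖γ z‖) : HasLogC δ := by
  obtain ⟨θ, hθ, he⟩ := hγ
  have hne : ∀ z, γ z ≠ 0 := fun z => by rw [← he z]; exact Complex.exp_ne_zero _
  have hs : ∀ z, δ z / γ z ∈ Complex.slitPlane := by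
    intro z
    have h1 : ‖(δ z - γ z) / γ z‖ < 1 := by
      rw [norm_div, div_lt_one (norm_pos_iff.2 (hne z))]; exact h z
    have h2 := Complex.mem_slitPlane_of_norm_lt_one h1
    have h3 : 1 + (δ z - γ z) / γ z = δ z / γ z := by field_simp [hne z]; ring
    rwa [h3] at h2
  refine ⟨fun z => θ z + Complex.log (δ z / γ z), ?_, ?_⟩
  · exact hθ.add ((cδ.div cγ hne).clog hs)
  · intro z
    have : δ z / γ z ≠ 0 := Complex.slitPlane_ne_zero (hs z)
    rw [Complex.exp_add, Complex.exp_log this, he z]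
    field_simp [hne z]

lemma hasLogC_homotopy (H : unitInterval × Circle → ℂ) (hH : Continuous H) (hne : ∀ p, H p ≠ 0)
    (s t : unitInterval) (h : HasLogC (fun z => H (s, z))) : HasLogC (fun z => H (t, z)) := by
  have hc : ∀ r, Continuous (fun z => H (r, z)) := fun r => hH.comp (by fun_prop)
  let Hc : C(unitInterval, C(Circle, ℂ)) := ContinuousMap.curry ⟨H, hH⟩
  have key : IsLocallyConstant (fun r : unitInterval => HasLogC (fun z => H (r, z))) := by
    rw [IsLocallyConstant.iff_eventually_eq]
    intro r
    obtain ⟨z0, -, hz0⟩ := isCompact_univ.exists_isMinOn (univ_nonempty)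
      ((hc r).norm.continuousOn (s := univ))
    have hm : 0 < ‖H (r, z0)‖ := norm_pos_iff.2 (hne _)
    have hmin : ∀ z, ‖H (r, z0)‖ ≤ ‖H (r, z)‖ := fun z => hz0 (mem_univ z)
    have hev : ∀ᶠ q in nhds r, dist (Hc q) (Hc r) < ‖H (r, z0)‖ / 2 :=
      (Metric.continuous_iff'.1 Hc.continuous r) _ (by positivity)
    filter_upwards [hev] with q hq
    have hd : ∀ z, ‖H (q, z) - H (r, z)‖ < ‖H (r, z0)‖ / 2 := by
      intro z
      have := (ContinuousMap.dist_apply_le_dist (f := Hc q) (g := Hc r) z).trans_lt hq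
      rwa [dist_eq_norm] at this
    apply propext
    constructor
    · intro hl
      refine hasLogC_of_close hl (hc q) (hc r) fun z => ?_
      have h1 := hd z
      have h2 := hmin z
      have h3 := norm_sub_norm_le (H (r, z)) (H (q, z))
      rw [norm_sub_rev] at h3 ⊢
      linarith
    · intro hl
      refine hasLogC_of_close hl (hc r) (hc q) fun z => ?_
      have h1 := hd z
      have h2 := hmin z
      linarith
  have := key.apply_eq_of_preconnectedSpace s t
  rw [← this]; exact h

lemma not_hasLogC_id (ρ : ℝ) : ¬ HasLogC (fun z : Circle => (ρ : ℂ) * (z : ℂ)) := by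
  rintro ⟨θ, hθ, he⟩
  have h := Complex.isCoveringMap_exp.eq_of_comp_eq (A := ℝ)
    (g₁ := fun t : ℝ => θ (Circle.exp t)) (g₂ := fun t : ℝ => (t : ℂ) * Complex.I + θ 1)
    (by fun_prop) (by fun_prop) (by
      funext t
      apply Subtype.ext
      simp only [Function.comp_apply, he, Complex.exp_add, Circle.coe_exp]
      simp [mul_comm]) 0 (by simp)
  have h2 := congrFun h (2 * Real.pi)
  simp at h2

lemma hasLogC_const (c : ℂ) (hc : c ≠ 0) : HasLogC (fun _ => c) :=
  ⟨fun _ => Complex.log c, continuous_const, fun _ => Complex.exp_log hc⟩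

theorem topo_zero (F : unitInterval × ℝ × ℂ → ℂ) (hF : Continuous F) (ρ R ν₁ : ℝ)
    (hρ : 0 < ρ) (hρR : ρ ≤ R) (hν : 0 ≤ ν₁)
    (hA : ∀ z : ℂ, ‖z‖ = ρ → ∀ s : ℝ, 0 ≤ s → s ≤ 1 → (1 - s : ℂ) * z + s * F (0, 0, z) ≠ 0)
    (hB : ∀ z : ℂ, ‖z‖ = ρ → ∀ t, F (t, 0, z) ≠ 0)
    (hD : ∀ z : ℂ, ‖z‖ = R → ∀ ν, 0 ≤ ν → F (1, ν, z) ≠ 0)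
    (hE : ∀ z : ℂ, F (1, ν₁, z) ≠ 0) :
    ∃ z : ℂ, ρ ≤ ‖z‖ ∧ ‖z‖ ≤ R ∧ F (1, 0, z) = 0 := by
  by_contra hcon
  push Not at hcon
  have hR : 0 < R := hρ.trans_le hρR
  have nz : ∀ (z : Circle) (r : ℝ), 0 ≤ r → ‖(r : ℂ) * (z : ℂ)‖ = r := by
    intro z r hr; simp [abs_of_nonneg hr, Circle.norm_coe]
  -- E
  have e1 : HasLogC (fun z : Circle => F (1, ν₁, (R : ℂ) * z)) := by
    have := hasLogC_homotopy (fun p => F (1, ν₁, ((p.1 : ℝ) : ℂ) * ((R : ℂ) * (p.2 : ℂ))))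
      (by fun_prop) (fun p => hE _) 0 1 (by
        simpa using hasLogC_const _ (hE 0))
    simpa using this
  have e2 : HasLogC (fun z : Circle => F (1, 0, (R : ℂ) * z)) := by
    have := hasLogC_homotopy (fun p => F (1, (p.1 : ℝ) * ν₁, ((R : ℂ) * (p.2 : ℂ))))
      (by fun_prop) (fun p => hD _ (nz _ _ hR.le) _ (mul_nonneg p.1.2.1 hν)) 1 0 (by
        simpa using e1)
    simpa using this
  have e3 : HasLogC (fun z : Circle => F (1, 0, (ρ : ℂ) * z)) := by
    have := hasLogC_homotopy (fun p => F (1, 0, ((((1 - (p.1 : ℝ)) * ρ + p.1 * R : ℝ) : ℂ) * (p.2 : ℂ))))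
      (by fun_prop) (fun p => by
        have h0 := p.1.2.1
        have h1 := p.1.2.2
        have h3 : ρ ≤ (1 - (p.1 : ℝ)) * ρ + p.1 * R := by nlinarith
        have h4 : (1 - (p.1 : ℝ)) * ρ + p.1 * R ≤ R := by nlinarith
        apply hcon
        · rw [nz _ _ (by linarith)]; exact h3
        · rw [nz _ _ (by linarith)]; exact h4) 1 0 (by
        simpa using e2)
    simpa using this
  have e4 : HasLogC (fun z : Circle => F (0, 0, (ρ : ℂ) * z)) := by
    have := hasLogC_homotopy (fun p => F (p.1, 0, ((ρ : ℂ) * (p.2 : ℂ))))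
      (by fun_prop) (fun p => hB _ (nz _ _ hρ.le) _) 1 0 (by
        simpa using e3)
    simpa using this
  have e5 : HasLogC (fun z : Circle => (ρ : ℂ) * z) := by
    have := hasLogC_homotopy (fun p => (1 - ((p.1 : ℝ) : ℂ)) * ((ρ : ℂ) * (p.2 : ℂ))
        + ((p.1 : ℝ) : ℂ) * F (0, 0, ((ρ : ℂ) * (p.2 : ℂ))))
      (by fun_prop) (fun p => hA _ (nz _ _ hρ.le) _ p.1.2.1 p.1.2.2) 1 0 (by
        simpa using e4)
    simpa using this
  exact not_hasLogC_id ρ e5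

lemma exists_weight {T : ℝ} (hT : 0 < T) (k : ℝ → ℝ) (hk : IntervalIntegrable k volume 0 T)
    (hk0 : ∀ t, 0 ≤ k t) : ∃ ω : ℝ → ℝ, Continuous ω ∧ Monotone ω ∧ (∀ x, 0 < ω x) ∧
      ∀ x ∈ Icc 0 T, 2 * T * ∫ t in (0:ℝ)..x, k t * ω t ≤ ω x := by
  set k0 : ℝ → ℝ := (Ioc 0 T).indicator k with hk0def
  have hki : Integrable k0 :=
    ((intervalIntegrable_iff_integrableOn_Ioc_of_le hT.le).1 hk).integrable_indicator
      measurableSet_Ioc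
  have hkk : ∀ t, 0 ≤ k0 t := fun t => indicator_nonneg (fun _ _ => hk0 _) _
  set K : ℝ → ℝ := fun x => ∫ t in (0:ℝ)..x, k0 t with hK
  have hKc : Continuous K := intervalIntegral.continuous_primitive
    (fun a b => hki.intervalIntegrable) 0
  have hKm : Monotone K := by
    intro x y hxy
    have : K y - K x = ∫ t in x..y, k0 t :=
      intervalIntegral.integral_interval_sub_left hki.intervalIntegrable hki.intervalIntegrable
    have h2 : 0 ≤ ∫ t in x..y, k0 t :=
      intervalIntegral.integral_nonneg hxy (fun t _ => hkk t)
    linarith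
  refine ⟨fun x => Real.exp (2 * T * K x), by fun_prop, ?_, fun x => Real.exp_pos _, ?_⟩
  · intro x y hxy
    exact Real.exp_le_exp.2 (mul_le_mul_of_nonneg_left (hKm hxy) (by positivity))
  intro x hx
  -- FTC
  have hKac : AbsolutelyContinuousOnInterval K 0 x :=
    hki.intervalIntegrable.absolutelyContinuousOnInterval_intervalIntegral (by simp)
  have hEac : AbsolutelyContinuousOnInterval (fun y => Real.exp (2 * T * K y)) 0 x := by
    have hl : ∀ y ∈ uIcc 0 x, ∀ z ∈ uIcc 0 x,
        dist (Real.exp (2 * T * K y)) (Real.exp (2 * T * K z)) ≤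
          (2 * T * Real.exp (2 * T * K x)) * dist (K y) (K z) := by
      have main : ∀ y ∈ uIcc 0 x, ∀ z ∈ uIcc 0 x, y ≤ z →
        dist (Real.exp (2 * T * K y)) (Real.exp (2 * T * K z)) ≤
          (2 * T * Real.exp (2 * T * K x)) * dist (K y) (K z) := by
        intro y hy z hz hyz
        rw [uIcc_of_le hx.1] at hz
        have h1 := hKm hyz
        have h2 := hKm hz.2
        rw [dist_comm, dist_comm (K y), Real.dist_eq, Real.dist_eq,
          abs_of_nonneg (sub_nonneg.2 h1), abs_of_nonneg (sub_nonneg.2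
            (Real.exp_le_exp.2 (mul_le_mul_of_nonneg_left h1 (by positivity))))]
        have h3 := Real.add_one_le_exp (2 * T * K y - 2 * T * K z)
        have h4 : Real.exp (2 * T * K y) = Real.exp (2 * T * K y - 2 * T * K z)
          * Real.exp (2 * T * K z) := by rw [← Real.exp_add]; congr 1; ring
        have h5 : Real.exp (2 * T * K z) ≤ Real.exp (2 * T * K x) :=
          Real.exp_le_exp.2 (mul_le_mul_of_nonneg_left h2 (by positivity))
        have h6 := Real.exp_pos (2 * T * K z)
        have h7 : Real.exp (2 * T * K z) - Real.exp (2 * T * K y) ≤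
            2 * T * (K z - K y) * Real.exp (2 * T * K z) := by
          rw [h4]; nlinarith
        have h8 : 0 ≤ 2 * T * (K z - K y) := by
          have := sub_nonneg.2 h1; positivity
        calc _ ≤ _ := h7
          _ ≤ 2 * T * (K z - K y) * Real.exp (2 * T * K x) := by gcongr
          _ = _ := by ring
      intro y hy z hz
      rcases le_total y z with h | h
      · exact main y hy z hz h
      · rw [dist_comm, dist_comm (K y)]; exact main z hz y hy h
    unfold AbsolutelyContinuousOnInterval at hKac ⊢
    apply squeeze_zero' ?_ ?_ (by simpa using hKac.const_mul (2 * T * Real.exp (2 * T * K x)))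
    · exact Filter.Eventually.of_forall <| fun _ ↦ Finset.sum_nonneg (fun i hi ↦ dist_nonneg)
    rw [eventually_inf_principal]
    filter_upwards with E hE
    rw [Finset.mul_sum]
    refine Finset.sum_le_sum fun i hi => ?_
    exact hl _ (hE.1 i hi).1 _ (hE.1 i hi).2
  have h1 := hEac.integral_deriv_eq_sub
  have h2 : ∫ y in (0:ℝ)..x, deriv (fun y => Real.exp (2 * T * K y)) y =
      ∫ y in (0:ℝ)..x, 2 * T * (k y * Real.exp (2 * T * K y)) := by
    apply intervalIntegral.integral_congr_ae
    have := (hki.intervalIntegrable (a := 0) (b := x)).ae_hasDerivAt_integral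
    filter_upwards [this] with y hy hy2
    have h3 := hy (uIoc_subset_uIcc hy2) 0 (by simp)
    have h4 := (h3.const_mul (2 * T)).exp
    rw [h4.deriv]
    rw [uIoc_of_le hx.1] at hy2
    have hm : y ∈ Ioc 0 T := ⟨hy2.1, hy2.2.trans hx.2⟩
    have : k0 y = k y := indicator_of_mem hm k
    rw [this]; ring
  rw [h2, intervalIntegral.integral_const_mul] at h1
  have h3 := Real.exp_pos (2 * T * K 0)
  linarith

lemma ibp {c d : ℝ} (hcd : c ≤ d) {p w ψ ψ' : ℝ → ℝ} (hp : IntervalIntegrable p volume c d)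
    (hw : ∀ x ∈ Icc c d, w x = w c - ∫ t in c..x, p t)
    (hψ : ∀ x ∈ Icc c d, HasDerivWithinAt ψ (ψ' x) (Icc c d) x)
    (hψ' : ContinuousOn ψ' (Icc c d)) :
    w d * ψ d - w c * ψ c = (∫ x in c..d, w x * ψ' x) - ∫ x in c..d, p x * ψ x := by
  set W : ℝ → ℝ := fun x => w c - ∫ t in c..x, p t with hW
  have hP : AbsolutelyContinuousOnInterval (fun x => ∫ t in c..x, p t) c d :=
    hp.absolutelyContinuousOnInterval_intervalIntegral (by simp)
  have hconst : AbsolutelyContinuousOnInterval (fun _ : ℝ => w c) c d :=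
    (LipschitzWith.const (w c)).lipschitzOnWith.absolutelyContinuousOnInterval
  have hWac : AbsolutelyContinuousOnInterval W c d := hconst.sub hP
  have hψc : ContinuousOn ψ (Icc c d) := fun x hx => (hψ x hx).continuousWithinAt
  have hψac : AbsolutelyContinuousOnInterval ψ c d := by
    obtain ⟨C, hC⟩ := isCompact_Icc.exists_bound_of_continuousOn hψ'
    have : LipschitzOnWith (Real.toNNReal C) ψ (uIcc c d) := by
      rw [uIcc_of_le hcd]
      refine (convex_Icc c d).lipschitzOnWith_of_nnnorm_hasDerivWithin_le hψ fun x hx => ?_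
      rw [← NNReal.coe_le_coe]
      exact (hC x hx).trans (Real.le_coe_toNNReal C)
    exact this.absolutelyContinuousOnInterval
  have h1 := hWac.integral_deriv_mul_eq_sub hψac
  have hwd : W d = w d := (hw d ⟨hcd, le_rfl⟩).symm
  have hwc : W c = w c := by simp [hW]
  have hWcont : ContinuousOn w (Icc c d) := by
    have := hWac.continuousOn
    rw [uIcc_of_le hcd] at this
    exact this.congr hw
  rw [hwd, hwc] at h1
  rw [← h1, ← intervalIntegral.integral_sub]
  · apply intervalIntegral.integral_congr_ae
    have hne : ∀ᵐ x : ℝ, x ≠ d := by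
      have : (volume : Measure ℝ) {d} = 0 := by simp
      exact compl_mem_ae_iff.2 this
    filter_upwards [hp.ae_hasDerivAt_integral, hne] with x hx hxd hxm
    have hx1 := hx (uIoc_subset_uIcc hxm) c (by simp)
    rw [uIoc_of_le hcd] at hxm
    have hxI : x ∈ Icc c d := ⟨hxm.1.le, hxm.2⟩
    have hxlt : x < d := lt_of_le_of_ne hxm.2 hxd
    have hd1 : deriv W x = - p x := by
      have := hx1.const_sub (w c)
      exact this.deriv
    have hd2 : deriv ψ x = ψ' x :=
      ((hψ x hxI).hasDerivAt (Icc_mem_nhds hxm.1 hxlt)).deriv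
    rw [hd1, hd2, hw x hxI]
    simp only [hW]; ring
  · apply ContinuousOn.intervalIntegrable
    rw [uIcc_of_le hcd]; exact hWcont.mul hψ'
  · apply hp.mul_continuousOn
    rw [uIcc_of_le hcd]; exact hψc

lemma continuousOn_prim {T : ℝ} (hT : 0 < T) {h : ℝ → ℝ} (hh : IntervalIntegrable h volume 0 T) :
    ContinuousOn (fun x => ∫ t in (0:ℝ)..x, h t) (Icc 0 T) := by
  have := intervalIntegral.continuousOn_primitive_interval' (μ := volume) hh left_mem_uIcc
  rwa [uIcc_of_le hT.le] at this

lemma intervalIntegrable_sub' {T : ℝ} {h : ℝ → ℝ} (hh : IntervalIntegrable h volume 0 T)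
    {x y : ℝ} (hx : x ∈ Icc 0 T) (hy : y ∈ Icc 0 T) : IntervalIntegrable h volume x y := by
  apply hh.mono_set
  rw [uIcc_of_le (hx.1.trans hx.2)]
  exact uIcc_subset_Icc hx hy

lemma continuousOn_prim2 {T : ℝ} (hT : 0 < T) {h : ℝ → ℝ} (hh : IntervalIntegrable h volume 0 T) :
    ContinuousOn (fun x => ∫ s in (0:ℝ)..x, ∫ t in (0:ℝ)..s, h t) (Icc 0 T) := by
  apply continuousOn_prim hT
  apply ContinuousOn.intervalIntegrable
  rw [uIcc_of_le hT.le]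
  exact continuousOn_prim hT hh

/-- double primitive as a continuous map -/
noncomputable def DP {T : ℝ} (hT : 0 < T) (h : ℝ → ℝ) (hh : IntervalIntegrable h volume 0 T) :
    C(Icc (0:ℝ) T, ℝ) :=
  ⟨fun x => ∫ s in (0:ℝ)..x, ∫ t in (0:ℝ)..s, h t, by
    exact (continuousOn_prim2 hT hh).comp_continuous continuous_subtype_val (fun x => x.2)⟩

theorem ivp_exists {T : ℝ} (hT : 0 < T) (f : ℝ → ℝ → ℝ) (k b : ℝ → ℝ)
    (hk : IntervalIntegrable k volume 0 T) (hk0 : ∀ t, 0 ≤ k t)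
    (hf : ∀ u : ℝ → ℝ, Continuous u → IntervalIntegrable (fun t => f t (u t)) volume 0 T)
    (hlip : ∀ t s s', |f t s - f t s'| ≤ k t * |s - s'|)
    (hb : IntervalIntegrable b volume 0 T) :
    ∃ S : unitInterval × ℝ × ℝ × ℝ → C(Icc (0:ℝ) T, ℝ), Continuous S ∧
      ∀ (p : unitInterval × ℝ × ℝ × ℝ), ∀ x : Icc (0:ℝ) T,
        S p x = p.2.2.1 + p.2.2.2 * x - p.1 * ∫ s in (0:ℝ)..x, ∫ t in (0:ℝ)..s,
          (f t (IccExtend hT.le (S p) t) + p.2.1 * b t) := by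
  obtain ⟨ω, hωc, hωm, hωp, hω⟩ := exists_weight hT k hk hk0
  have hne : ∀ x, ω x ≠ 0 := fun x => (hωp x).ne'
  let ωi : C(Icc (0:ℝ) T, ℝ) := ⟨fun x => (ω x)⁻¹, by
    exact (hωc.comp continuous_subtype_val).inv₀ (fun x => hne _)⟩
  let ωX : C(Icc (0:ℝ) T, ℝ) := ⟨fun x => ω x, hωc.comp continuous_subtype_val⟩
  let idX : C(Icc (0:ℝ) T, ℝ) := ⟨fun x => x, continuous_subtype_val⟩
  have hfw : ∀ w : C(Icc (0:ℝ) T, ℝ), IntervalIntegrable (fun t => f t (ω t * IccExtend hT.le w t)) volume 0 T :=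
    fun w => hf _ (hωc.mul w.continuous.Icc_extend')
  let Φ : (unitInterval × ℝ × ℝ × ℝ) → C(Icc (0:ℝ) T, ℝ) → C(Icc (0:ℝ) T, ℝ) := fun p w =>
    ωi * (ContinuousMap.const _ p.2.2.1 + p.2.2.2 • idX
      - (p.1 : ℝ) • (DP hT _ (hfw w) + p.2.1 • DP hT _ hb))
  have hΦa : ∀ p w x, Φ p w x = (ω x)⁻¹ * (p.2.2.1 + p.2.2.2 * x
      - p.1 * ((∫ s in (0:ℝ)..x, ∫ t in (0:ℝ)..s, f t (ω t * IccExtend hT.le w t))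
        + p.2.1 * ∫ s in (0:ℝ)..x, ∫ t in (0:ℝ)..s, b t)) := fun _ _ _ => rfl
  have hcontr : ∀ p, ContractingWith (1/2) (Φ p) := by
    intro p
    refine ⟨by rw [← NNReal.coe_lt_coe]; norm_num, LipschitzWith.of_dist_le_mul fun w v => ?_⟩
    have hcoe : ((1/2 : NNReal) : ℝ) = 1/2 := by norm_num
    rw [hcoe]
    rw [ContinuousMap.dist_le (by positivity)]
    intro x
    have hx := x.2
    have e1 : Φ p w x - Φ p v x = - ((ω x)⁻¹ * (p.1 * ((∫ s in (0:ℝ)..x, ∫ t in (0:ℝ)..s,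
        f t (ω t * IccExtend hT.le w t)) - ∫ s in (0:ℝ)..x, ∫ t in (0:ℝ)..s,
        f t (ω t * IccExtend hT.le v t)))) := by
      rw [hΦa, hΦa]
      ring
    have hD : 0 ≤ dist w v := dist_nonneg
    have inner : ∀ s ∈ Icc (0:ℝ) T, |(∫ t in (0:ℝ)..s, f t (ω t * IccExtend hT.le w t))
        - ∫ t in (0:ℝ)..s, f t (ω t * IccExtend hT.le v t)| ≤ dist w v * (ω s / (2 * T)) := by
      intro s hs
      have h0 : (0:ℝ) ∈ Icc 0 T := ⟨le_rfl, hT.le⟩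
      rw [← intervalIntegral.integral_sub (intervalIntegrable_sub' (hfw w) h0 hs)
        (intervalIntegrable_sub' (hfw v) h0 hs)]
      have hkω : IntervalIntegrable (fun t => k t * ω t) volume 0 s :=
        (intervalIntegrable_sub' hk h0 hs).mul_continuousOn hωc.continuousOn
      have b1 : ‖∫ t in (0:ℝ)..s, (f t (ω t * IccExtend hT.le w t)
          - f t (ω t * IccExtend hT.le v t))‖ ≤ ∫ t in (0:ℝ)..s, dist w v * (k t * ω t) := by
        apply intervalIntegral.norm_integral_le_of_norm_le hs.1 _ (hkω.const_mul _)
        refine Eventually.of_forall fun t ht => ?_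
        have := hlip t (ω t * IccExtend hT.le w t) (ω t * IccExtend hT.le v t)
        rw [← mul_sub, abs_mul, abs_of_pos (hωp t)] at this
        have h3 : |IccExtend hT.le w t - IccExtend hT.le v t| ≤ dist w v := by
          have := ContinuousMap.dist_apply_le_dist (f := w) (g := v) (projIcc 0 T hT.le t)
          rwa [Real.dist_eq] at this
        rw [Real.norm_eq_abs]
        calc _ ≤ _ := this
          _ ≤ k t * (ω t * dist w v) := by
            have := hk0 t
            have := (hωp t).le
            gcongr
          _ = _ := by ring
      rw [intervalIntegral.integral_const_mul] at b1
      rw [← Real.norm_eq_abs]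
      refine b1.trans (mul_le_mul_of_nonneg_left ?_ hD)
      rw [le_div_iff₀ (by positivity)]
      have := hω s hs
      linarith
    have hHc : ∀ u : C(Icc (0:ℝ) T, ℝ), ContinuousOn (fun s => ∫ t in (0:ℝ)..s, f t (ω t * IccExtend hT.le u t))
        (uIcc 0 (x:ℝ)) := fun u => (continuousOn_prim hT (hfw u)).mono (by
          rw [uIcc_of_le hx.1]; exact Icc_subset_Icc le_rfl hx.2)
    have outer : |(∫ s in (0:ℝ)..x, ∫ t in (0:ℝ)..s,
        f t (ω t * IccExtend hT.le w t)) - ∫ s in (0:ℝ)..x, ∫ t in (0:ℝ)..s,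
        f t (ω t * IccExtend hT.le v t)| ≤ dist w v * (ω x / 2) := by
      rw [← intervalIntegral.integral_sub (hHc w).intervalIntegrable (hHc v).intervalIntegrable,
        ← Real.norm_eq_abs]
      have : ‖∫ s in (0:ℝ)..x, ((∫ t in (0:ℝ)..s, f t (ω t * IccExtend hT.le w t))
        - ∫ t in (0:ℝ)..s, f t (ω t * IccExtend hT.le v t))‖ ≤
          dist w v * (ω x / (2 * T)) * |(x:ℝ) - 0| := by
        apply intervalIntegral.norm_integral_le_of_norm_le_const
        intro s hs
        rw [uIoc_of_le hx.1] at hs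
        refine (inner s ⟨hs.1.le, hs.2.trans hx.2⟩).trans ?_
        have := hωm hs.2
        gcongr
      refine this.trans ?_
      rw [sub_zero, abs_of_nonneg hx.1]
      have h1 : dist w v * (ω x / (2 * T)) * (x:ℝ) ≤ dist w v * (ω x / (2 * T)) * T := by
        have := (hωp x).le
        have := hx.2
        gcongr
      refine h1.trans (le_of_eq ?_)
      field_simp
    rw [Real.dist_eq, e1, abs_neg, abs_mul, abs_mul, abs_of_nonneg p.1.2.1,
      abs_of_pos (inv_pos.2 (hωp x))]
    have hp1 := p.1.2.2
    have hp0 := p.1.2.1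
    calc _ ≤ (ω x)⁻¹ * (1 * (dist w v * (ω x / 2))) := by
          have := (inv_pos.2 (hωp x)).le
          gcongr
      _ = _ := by have := hne x; field_simp
  let W : unitInterval × ℝ × ℝ × ℝ → C(Icc (0:ℝ) T, ℝ) := fun p => (hcontr p).fixedPoint
  have hWfix : ∀ p, Φ p (W p) = W p := fun p => (hcontr p).fixedPoint_isFixedPt
  have hΦc : ∀ w, Continuous (fun p => Φ p w) := by
    intro w
    simp only [Φ]
    have : Continuous fun r : ℝ => (ContinuousMap.const (Icc (0:ℝ) T) r) :=
      ContinuousMap.continuous_const'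
    fun_prop
  have hWc : Continuous W := by
    rw [Metric.continuous_iff']
    intro p ε hε
    have := (Metric.continuous_iff'.1 (hΦc (W p))) p (ε / 2) (by positivity)
    filter_upwards [this] with q hq
    rw [hWfix p] at hq
    have h1 : dist (W q) (W p) ≤ dist (Φ q (W q)) (Φ q (W p)) + dist (Φ q (W p)) (W p) := by
      conv_lhs => rw [← hWfix q]
      exact dist_triangle _ _ _
    have h2 := (hcontr q).toLipschitzWith.dist_le_mul (W q) (W p)
    have hcoe : ((1/2 : NNReal) : ℝ) = 1/2 := by norm_num
    rw [hcoe] at h2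
    linarith
  refine ⟨fun p => ωX * W p, continuous_const.mul hWc, ?_⟩
  intro p x
  let V : C(Icc (0:ℝ) T, ℝ) := ωX * W p
  have h1 : ∀ t, IccExtend hT.le V t = ω (projIcc 0 T hT.le t) * IccExtend hT.le (W p) t :=
    fun t => rfl
  have h2 := congrArg (fun u : C(Icc (0:ℝ) T, ℝ) => u x) (hWfix p)
  simp only [hΦa] at h2
  rw [ContinuousMap.mul_apply, ← h2]
  have hωX : ωX x = ω x := rfl
  rw [hωX, ← mul_assoc, mul_inv_cancel₀ (hne _), one_mul]
  congr 2
  have h0 : (0:ℝ) ∈ Icc 0 T := ⟨le_rfl, hT.le⟩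
  have hbx : ∀ s ∈ Icc (0:ℝ) T, IntervalIntegrable b volume 0 s := fun s hs =>
    intervalIntegrable_sub' hb h0 hs
  have e3 : ∀ s ∈ Icc (0:ℝ) T, (∫ t in (0:ℝ)..s, (f t (IccExtend hT.le V t)
      + p.2.1 * b t)) = (∫ t in (0:ℝ)..s, f t (ω t * IccExtend hT.le (W p) t))
        + p.2.1 * ∫ t in (0:ℝ)..s, b t := by
    intro s hs
    rw [← intervalIntegral.integral_const_mul, ← intervalIntegral.integral_add
      (intervalIntegrable_sub' (hfw _) h0 hs) ((hbx s hs).const_mul _)]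
    apply intervalIntegral.integral_congr
    intro t ht
    rw [uIcc_of_le hs.1] at ht
    simp only [h1]
    rw [projIcc_of_mem hT.le ⟨ht.1, ht.2.trans hs.2⟩]
  have hsub : uIcc 0 (x:ℝ) ⊆ Icc 0 T := by
    rw [uIcc_of_le x.2.1]; exact Icc_subset_Icc le_rfl x.2.2
  have e4 := intervalIntegral.integral_congr (μ := volume) (a := 0) (b := (x:ℝ))
    (f := fun s => ∫ t in (0:ℝ)..s, (f t (IccExtend hT.le V t) + p.2.1 * b t))
    (g := fun s => (∫ t in (0:ℝ)..s, f t (ω t * IccExtend hT.le (W p) t))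
        + p.2.1 * ∫ t in (0:ℝ)..s, b t) (fun s hs => e3 s (hsub hs))
  refine Eq.trans ?_ e4.symm
  rw [intervalIntegral.integral_add, intervalIntegral.integral_const_mul]
  · exact ((continuousOn_prim hT (hfw _)).mono hsub).intervalIntegrable
  · exact (((continuousOn_prim hT hb).mono hsub).intervalIntegrable).const_mul _

/-- solution with boundary conditions; `N = true` Neumann, `N = false` periodic -/
def BSol (N : Bool) (T : ℝ) (h u u' : ℝ → ℝ) : Prop :=
  IsSolOn T h u u' ∧ IntervalIntegrable h volume 0 T ∧ u' 0 = u' T ∧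
    (if N = true then u' 0 = 0 else u 0 = u T)

lemma IsSolOn.contu {T : ℝ} {h u u' : ℝ → ℝ} (H : IsSolOn T h u u') :
    ContinuousOn u (Icc 0 T) := fun x hx => (H.1 x hx).continuousWithinAt

lemma BSol.contu {N : Bool} {T : ℝ} {h u u' : ℝ → ℝ} (H : BSol N T h u u') :
    ContinuousOn u (Icc 0 T) := H.1.contu

lemma BSol.int {N : Bool} {T : ℝ} (hT : 0 < T) {h u u' : ℝ → ℝ} (H : BSol N T h u u') :
    ∫ t in (0:ℝ)..T, h t = 0 := by
  have h1 := H.1.2.2 T ⟨hT.le, le_rfl⟩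
  have h2 := H.2.2.1
  linarith

lemma IsSolOn.diff {T : ℝ} {h u u' : ℝ → ℝ} (H : IsSolOn T h u u')
    (hi : IntervalIntegrable h volume 0 T)
    {x y : ℝ} (hx : x ∈ Icc 0 T) (hy : y ∈ Icc 0 T) : u' y = u' x - ∫ t in x..y, h t := by
  have hT : 0 ≤ T := hx.1.trans hx.2
  have h0 : (0:ℝ) ∈ Icc 0 T := ⟨le_rfl, hT⟩
  rw [H.2.2 y hy, H.2.2 x hx]
  have := intervalIntegral.integral_interval_sub_left (intervalIntegrable_sub' hi h0 hy)
    (intervalIntegrable_sub' hi h0 hx)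
  linarith

lemma BSol.crit {N : Bool} {T : ℝ} (hT : 0 < T) {h u u' : ℝ → ℝ} (H : BSol N T h u u') :
    ∃ x ∈ Icc 0 T, u' x = 0 := by
  have h4 := H.2.2.2
  split_ifs at h4
  · exact ⟨0, ⟨le_rfl, hT.le⟩, h4⟩
  · obtain ⟨c, hc, hc2⟩ := exists_hasDerivAt_eq_zero hT H.contu h4 (f' := u')
      (fun x hx => (H.1.1 x (Ioo_subset_Icc_self hx)).hasDerivAt (Icc_mem_nhds hx.1 hx.2))
    exact ⟨c, Ioo_subset_Icc_self hc, hc2⟩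

lemma BSol.deriv_le {N : Bool} {T : ℝ} (hT : 0 < T) {h u u' : ℝ → ℝ} (H : BSol N T h u u')
    {x : ℝ} (hx : x ∈ Icc 0 T) : |u' x| ≤ ∫ t in (0:ℝ)..T, |h t| := by
  obtain ⟨x0, hx0, hc⟩ := H.crit hT
  rw [H.1.diff H.2.1 hx0 hx, hc, zero_sub, abs_neg, ← Real.norm_eq_abs]
  refine (intervalIntegral.norm_integral_le_integral_norm_uIoc).trans ?_
  rw [intervalIntegral.integral_of_le hT.le]
  apply setIntegral_mono_set
  · exact ((intervalIntegrable_iff_integrableOn_Ioc_of_le hT.le).1 H.2.1).norm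
  · exact Eventually.of_forall fun _ => norm_nonneg _
  · apply LE.le.eventuallyLE
    intro y hy
    rw [mem_uIoc] at hy
    rcases hy with hy | hy
    · exact ⟨hx0.1.trans_lt hy.1, hy.2.trans hx.2⟩
    · exact ⟨hx.1.trans_lt hy.1, hy.2.trans hx0.2⟩

lemma IsSolOn.lip {T : ℝ} {h u u' : ℝ → ℝ} (H : IsSolOn T h u u') {C : ℝ}
    (hC : ∀ x ∈ Icc 0 T, |u' x| ≤ C) {x y : ℝ} (hx : x ∈ Icc 0 T) (hy : y ∈ Icc 0 T) :
    |u y - u x| ≤ C * |y - x| := by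
  have := (convex_Icc (0:ℝ) T).norm_image_sub_le_of_norm_hasDerivWithin_le H.1 hC hx hy
  simpa [Real.norm_eq_abs] using this

lemma BSol.test {N : Bool} {T : ℝ} (hT : 0 < T) {h u u' : ℝ → ℝ} (H : BSol N T h u u')
    {ψ ψ' : ℝ → ℝ} (hψ : ∀ s, HasDerivAt ψ (ψ' s) s) (hψ' : Continuous ψ') :
    ∫ x in (0:ℝ)..T, ψ' (u x) * u' x ^ 2 = ∫ x in (0:ℝ)..T, h x * ψ (u x) := by
  have h1 := ibp hT.le (w := u') (ψ := fun x => ψ (u x)) (ψ' := fun x => ψ' (u x) * u' x)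
    H.2.1 H.1.2.2 (fun x hx => (hψ (u x)).comp_hasDerivWithinAt x (H.1.1 x hx))
    ((hψ'.comp_continuousOn H.contu).mul H.1.2.1)
  have h2 : u' T * ψ (u T) - u' 0 * ψ (u 0) = 0 := by
    have h4 := H.2.2.2
    rw [← H.2.2.1]
    split_ifs at h4
    · rw [h4]; ring
    · rw [h4]; ring
  rw [h2] at h1
  have h3 : ∫ x in (0:ℝ)..T, u' x * (ψ' (u x) * u' x) = ∫ x in (0:ℝ)..T, ψ' (u x) * u' x ^ 2 := by
    congr 1; funext x; ring
  rw [h3] at h1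
  linarith

lemma hasDerivAt_posSq (R s : ℝ) :
    HasDerivAt (fun s => (max (s - R) 0) ^ 2) (2 * max (s - R) 0) s := by
  rcases lt_trichotomy s R with hs | hs | hs
  · have : (fun s => (max (s - R) 0) ^ 2) =ᶠ[nhds s] fun _ => 0 := by
      filter_upwards [Iio_mem_nhds hs] with t ht
      rw [max_eq_right (by linarith [mem_Iio.1 ht])]; simp
    rw [max_eq_right (by linarith), mul_zero]
    exact (hasDerivAt_const s (0:ℝ)).congr_of_eventuallyEq this
  · subst hs
    simp only [sub_self, max_self, mul_zero]
    rw [hasDerivAt_iff_isLittleO]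
    simp only [sub_self, max_self, smul_zero, sub_zero]
    have h1 : (fun x : ℝ => (max (x - s) 0) ^ 2 - 0 ^ 2) =O[nhds s] fun x => (x - s) ^ 2 := by
      apply Asymptotics.IsBigO.of_bound 1
      filter_upwards with x
      simp only [Real.norm_eq_abs, abs_pow, one_mul]
      rw [zero_pow two_ne_zero, sub_zero, abs_pow]
      apply pow_le_pow_left₀ (abs_nonneg _)
      rw [abs_of_nonneg (le_max_right _ _)]
      exact max_le (le_abs_self _) (abs_nonneg _)
    refine h1.trans_isLittleO ?_
    have := Asymptotics.isLittleO_pow_sub_sub s (m := 2) (by norm_num)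
    simpa [Real.norm_eq_abs, sq_abs] using this
  · have : (fun s => (max (s - R) 0) ^ 2) =ᶠ[nhds s] fun s => (s - R) ^ 2 := by
      filter_upwards [Ioi_mem_nhds hs] with t ht
      rw [max_eq_left (by linarith [mem_Ioi.1 ht])]
    rw [max_eq_left (by linarith)]
    have h2 := ((hasDerivAt_id s).sub_const R).pow 2
    refine (h2.congr_of_eventuallyEq this).congr_deriv ?_
    simp

lemma BSol.le {N : Bool} {T : ℝ} (hT : 0 < T) {h u u' : ℝ → ℝ} (H : BSol N T h u u') (R : ℝ)
    (hR : ∀ᵐ x ∂(volume.restrict (Icc 0 T)), R < u x → h x ≤ 0)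
    (hx0 : ∃ x ∈ Icc 0 T, u x ≤ R) : ∀ x ∈ Icc 0 T, u x ≤ R := by
  have h1 := H.test hT (hasDerivAt_posSq R) (by fun_prop)
  have h2 : ∫ x in (0:ℝ)..T, h x * (max (u x - R) 0) ^ 2 ≤ 0 := by
    rw [intervalIntegral.integral_of_le hT.le]
    apply integral_nonpos_of_ae
    have := ae_restrict_of_ae_restrict_of_subset (μ := volume)
      (Ioc_subset_Icc_self (a := (0:ℝ)) (b := T)) hR
    filter_upwards [this] with x hx
    rcases le_or_gt (u x) R with h3 | h3
    · rw [max_eq_right (by linarith)]; simp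
    · exact mul_nonpos_of_nonpos_of_nonneg (hx h3) (sq_nonneg _)
  have hc : ContinuousOn (fun x => 2 * max (u x - R) 0 * u' x ^ 2) (Icc 0 T) := by
    have := H.contu
    have := H.1.2.1
    fun_prop
  have h3 : ∀ x ∈ Icc 0 T, 2 * max (u x - R) 0 * u' x = 0 := by
    by_contra hcon
    push Not at hcon
    obtain ⟨c, hc1, hc2⟩ := hcon
    have := intervalIntegral.integral_pos hT hc (fun x _ => by positivity) ⟨c, hc1, by
      have h5 : max (u c - R) 0 ≠ 0 := by intro h; simp [h] at hc2
      have h6 : u' c ≠ 0 := by intro h; simp [h] at hc2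
      have h7 : 0 < max (u c - R) 0 := lt_of_le_of_ne (le_max_right _ _) h5.symm
      positivity⟩
    linarith
  obtain ⟨x0, hx0, hu0⟩ := hx0
  intro x hx
  have h4 := (convex_Icc (0:ℝ) T).norm_image_sub_le_of_norm_hasDerivWithin_le (C := 0)
    (f := fun x => (max (u x - R) 0) ^ 2) (f' := fun x => 2 * max (u x - R) 0 * u' x)
    (fun y hy => (hasDerivAt_posSq R (u y)).comp_hasDerivWithinAt y (H.1.1 y hy))
    (fun y hy => by rw [h3 y hy]; simp) hx0 hx
  simp only [zero_mul, norm_le_zero_iff] at h4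
  rw [max_eq_right (by linarith : u x0 - R ≤ 0)] at h4
  have h5 : max (u x - R) 0 = 0 := by
    apply pow_eq_zero_iff (two_ne_zero) |>.1
    linarith
  have := le_max_left (u x - R) 0
  linarith

lemma BSol.neg {N : Bool} {T : ℝ} {h u u' : ℝ → ℝ} (H : BSol N T h u u') :
    BSol N T (fun x => - h x) (fun x => - u x) (fun x => - u' x) := by
  obtain ⟨⟨h1, h2, h3⟩, h4, h5, h6⟩ := H
  refine ⟨⟨fun x hx => (h1 x hx).neg, h2.neg, fun x hx => ?_⟩, h4.neg, by simp only [h5], ?_⟩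
  · beta_reduce
    rw [h3 x hx, intervalIntegral.integral_neg]; ring
  · split_ifs with hN
    · rw [if_pos hN] at h6; simp only [h6, neg_zero]
    · rw [if_neg hN] at h6; simp only [h6]

lemma BSol.nonneg {N : Bool} {T : ℝ} (hT : 0 < T) {h u u' : ℝ → ℝ} (H : BSol N T h u u')
    (hR : ∀ᵐ x ∂(volume.restrict (Icc 0 T)), u x < 0 → 0 < h x) :
    ∀ x ∈ Icc 0 T, 0 ≤ u x := by
  by_cases hx0 : ∃ x ∈ Icc 0 T, 0 ≤ u x
  · have := H.neg.le hT 0 (by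
      filter_upwards [hR] with x hx h1
      have := hx (by linarith)
      linarith) (by
        obtain ⟨x, hx, h1⟩ := hx0
        exact ⟨x, hx, by linarith⟩)
    intro x hx
    have := this x hx
    linarith
  · push Not at hx0
    exfalso
    have h1 := H.int hT
    have hR' := ae_restrict_of_ae_restrict_of_subset (μ := volume)
      (Ioc_subset_Icc_self (a := (0:ℝ)) (b := T)) hR
    have hpos : ∀ᵐ x ∂(volume.restrict (Ioc 0 T)), 0 < h x := by
      filter_upwards [hR', ae_restrict_mem measurableSet_Ioc] with x hx hx2
      exact hx (hx0 x (Ioc_subset_Icc_self hx2))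
    have hnn : 0 ≤ᵐ[volume.restrict (Ioc 0 T)] h := hpos.mono fun x hx => hx.le
    have hi := (intervalIntegrable_iff_integrableOn_Ioc_of_le hT.le).1 H.2.1
    rw [intervalIntegral.integral_of_le hT.le, integral_eq_zero_iff_of_nonneg_ae hnn hi] at h1
    have : ∀ᵐ x ∂(volume.restrict (Ioc (0:ℝ) T)), False := by
      filter_upwards [h1, hpos] with x hx hx2
      simp only [Pi.zero_apply] at hx
      linarith
    rw [eventually_false_iff_eq_bot, ae_eq_bot, Measure.restrict_eq_zero] at this
    simp at this
    linarith

lemma uniq_zero {T : ℝ} (hT : 0 < T) {h u u' k : ℝ → ℝ} (H : IsSolOn T h u u')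
    (hi : IntervalIntegrable h volume 0 T) (hk : IntervalIntegrable k volume 0 T)
    (hk0 : ∀ t, 0 ≤ k t)
    (hle : ∀ x ∈ Icc 0 T, |h x| ≤ k x * |u x|) {x0 : ℝ} (hx0 : x0 ∈ Icc 0 T)
    (h0 : u x0 = 0) (h0' : u' x0 = 0) : ∀ x ∈ Icc 0 T, u x = 0 := by
  have hcK : ContinuousOn (fun x => ∫ t in (0:ℝ)..x, k t) (Icc 0 T) := continuousOn_prim hT hk
  have huc := isCompact_Icc.uniformContinuousOn_of_continuous hcK
  rw [Metric.uniformContinuousOn_iff_le] at huc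
  obtain ⟨δ, hδ, hK⟩ := huc (1 / (2 * T)) (by positivity)
  have hz : (0:ℝ) ∈ Icc 0 T := ⟨le_rfl, hT.le⟩
  have step : ∀ y ∈ Icc 0 T, u y = 0 → u' y = 0 → ∀ x ∈ Icc 0 T, |x - y| ≤ δ →
      u x = 0 ∧ u' x = 0 := by
    intro y hy h1 h2
    set J := Icc 0 T ∩ Metric.closedBall y δ with hJ
    have hJs : J ⊆ Icc 0 T := inter_subset_left
    have hyJ : y ∈ J := ⟨hy, Metric.mem_closedBall_self hδ.le⟩
    have hJc : IsCompact J := isCompact_Icc.inter_right Metric.isClosed_closedBall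
    have hJv : Convex ℝ J := (convex_Icc _ _).inter (convex_closedBall _ _)
    obtain ⟨z, hzJ, hzmax⟩ := hJc.exists_isMaxOn ⟨y, hyJ⟩ ((H.contu.mono hJs).abs)
    have hd : ∀ x ∈ J, |u' x| ≤ 1 / (2 * T) * |u z| := by
      intro x hx
      rw [H.diff hi hy (hJs hx), h2, zero_sub, abs_neg, ← Real.norm_eq_abs]
      have hsub : uIcc y x ⊆ J := by
        rw [← segment_eq_uIcc]; exact hJv.segment_subset hyJ hx
      have hint := (intervalIntegrable_sub' hk hy (hJs hx))
      have e1 : ‖∫ t in y..x, h t‖ ≤ |(∫ t in y..x, k t * |u z| : ℝ)| := by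
        apply intervalIntegral.norm_integral_le_abs_of_norm_le _ (hint.mul_const _)
        filter_upwards [ae_restrict_mem measurableSet_uIoc] with t ht
        have htJ := hsub (uIoc_subset_uIcc ht)
        exact (hle t (hJs htJ)).trans (mul_le_mul_of_nonneg_left (hzmax htJ) (hk0 t))
      refine e1.trans ?_
      rw [intervalIntegral.integral_mul_const, abs_mul, abs_abs]
      apply mul_le_mul_of_nonneg_right _ (abs_nonneg _)
      have := hK x (hJs hx) y hy hx.2
      rw [Real.dist_eq, intervalIntegral.integral_interval_sub_left
        (intervalIntegrable_sub' hk hz (hJs hx)) (intervalIntegrable_sub' hk hz hy)] at this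
      exact this
    have hzz : |u z| ≤ 1 / (2 * T) * |u z| * T := by
      have := hJv.norm_image_sub_le_of_norm_hasDerivWithin_le
        (fun x hx => (H.1 x (hJs hx)).mono hJs) hd hyJ hzJ
      rw [h1, sub_zero, Real.norm_eq_abs, Real.norm_eq_abs] at this
      refine this.trans (mul_le_mul_of_nonneg_left ?_ (by positivity))
      have := hJs hzJ
      rw [abs_le]
      constructor <;> linarith [this.1, this.2, hy.1, hy.2]
    have hz0 : |u z| = 0 := by
      have : 1 / (2 * T) * |u z| * T = |u z| / 2 := by field_simp
      have := abs_nonneg (u z)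
      linarith
    intro x hx hxd
    have hxJ : x ∈ J := ⟨hx, by simpa [Real.dist_eq] using hxd⟩
    constructor
    · have := hzmax hxJ
      simp only [mem_ofPred_eq, hz0] at this
      exact abs_nonpos_iff.1 this
    · have := hd x hxJ
      rw [hz0, mul_zero] at this
      exact abs_nonpos_iff.1 this
  have key : ∀ n : ℕ, ∀ x ∈ Icc 0 T, |x - x0| ≤ n * δ → u x = 0 ∧ u' x = 0 := by
    intro n
    induction n with
    | zero =>
      intro x hx hd
      simp only [Nat.cast_zero, zero_mul] at hd
      have : x = x0 := by linarith [abs_nonpos_iff.1 hd]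
      rw [this]; exact ⟨h0, h0'⟩
    | succ n ih =>
      intro x hx hd
      push_cast at hd
      have hn : (0:ℝ) < n + 1 := by positivity
      set y := x0 + (n / (n + 1) : ℝ) * (x - x0) with hy
      have hyI : y ∈ Icc 0 T := by
        have := (convex_Icc (0:ℝ) T).add_smul_sub_mem hx0 hx (t := (n / (n + 1) : ℝ))
          ⟨by positivity, by rw [div_le_one hn]; linarith⟩
        simpa [hy] using this
      have e1 : |y - x0| ≤ n * δ := by
        rw [hy, add_sub_cancel_left, abs_mul, abs_of_nonneg (by positivity), div_mul_eq_mul_div,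
          div_le_iff₀ hn]
        calc (n:ℝ) * |x - x0| ≤ n * ((n+1) * δ) := by gcongr
          _ = _ := by ring
      have e2 : |x - y| ≤ δ := by
        have : x - y = (x - x0) / (n + 1) := by rw [hy]; field_simp; ring
        rw [this, abs_div, abs_of_pos hn, div_le_iff₀ hn]
        linarith
      obtain ⟨q1, q2⟩ := ih y hyI e1
      exact step y hyI q1 q2 x hx e2
  intro x hx
  obtain ⟨n, hn⟩ := exists_nat_ge (|x - x0| / δ)
  exact (key n x hx ((div_le_iff₀ hδ).1 hn)).1

lemma BSol.min_zero {N : Bool} {T : ℝ} (hT : 0 < T) {h u u' : ℝ → ℝ} (H : BSol N T h u u')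
    (hu : ∀ x ∈ Icc 0 T, 0 ≤ u x) {x0 : ℝ} (hx0 : x0 ∈ Icc 0 T) (h0 : u x0 = 0) :
    ∃ y ∈ Icc 0 T, u y = 0 ∧ u' y = 0 := by
  refine ⟨x0, hx0, h0, ?_⟩
  have hl : u 0 = 0 → 0 ≤ u' 0 := by
    intro h0
    have hd := (H.1.1 0 ⟨le_rfl, hT.le⟩)
    have hne : (nhdsWithin (0:ℝ) (Icc 0 T \ {0})).NeBot := by
      have : Icc 0 T \ {0} = Ioc 0 T := Icc_sdiff_left
      rw [this, nhdsWithin_Ioc_eq_nhdsGT hT]; infer_instance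
    rw [hasDerivWithinAt_iff_tendsto_slope] at hd
    apply ge_of_tendsto hd
    filter_upwards [self_mem_nhdsWithin] with y hy
    rw [slope_def_field, h0, sub_zero, sub_zero]
    exact div_nonneg (hu y hy.1) hy.1.1
  have hr : u T = 0 → u' T ≤ 0 := by
    intro h0
    have hd := (H.1.1 T ⟨hT.le, le_rfl⟩)
    have hne : (nhdsWithin (T:ℝ) (Icc 0 T \ {T})).NeBot := by
      have : Icc 0 T \ {T} = Ico 0 T := Icc_sdiff_right
      rw [this, nhdsWithin_Ico_eq_nhdsLT hT]; infer_instance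
    rw [hasDerivWithinAt_iff_tendsto_slope] at hd
    apply le_of_tendsto hd
    filter_upwards [self_mem_nhdsWithin] with y hy
    rw [slope_def_field, h0, sub_zero]
    exact div_nonpos_of_nonneg_of_nonpos (hu y hy.1) (by linarith [hy.1.2])
  have h4 := H.2.2.2
  have h3 := H.2.2.1
  rcases eq_or_lt_of_le hx0.1 with h | h
  · subst h
    split_ifs at h4
    · exact h4
    · have := hl h0
      have := hr (by rw [← h4, h0])
      linarith
  rcases eq_or_lt_of_le hx0.2 with h' | h'
  · subst h'
    split_ifs at h4
    · rw [← h3, h4]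
    · have := hr h0
      have := hl (by rw [h4, h0])
      linarith
  · have hn := Icc_mem_nhds h h'
    apply IsLocalMin.hasDerivAt_eq_zero (f := u) (a := x0) _ ((H.1.1 x0 hx0).hasDerivAt hn)
    filter_upwards [hn] with y hy
    rw [h0]; exact hu y hy

lemma BSol.pos {N : Bool} {T : ℝ} (hT : 0 < T) {h u u' k : ℝ → ℝ} (H : BSol N T h u u')
    (hk : IntervalIntegrable k volume 0 T) (hk0 : ∀ t, 0 ≤ k t)
    (hle : ∀ x ∈ Icc 0 T, |h x| ≤ k x * |u x|) (hu : ∀ x ∈ Icc 0 T, 0 ≤ u x)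
    (hne : ∃ x ∈ Icc 0 T, u x ≠ 0) : ∀ x ∈ Icc 0 T, 0 < u x := by
  intro x hx
  rcases (hu x hx).lt_or_eq with h1 | h1
  · exact h1
  · exfalso
    obtain ⟨y, hy, e1, e2⟩ := H.min_zero hT hu hx h1.symm
    obtain ⟨z, hz, h5⟩ := hne
    exact h5 (uniq_zero hT H.1 H.2.1 hk hk0 hle hy e1 e2 z hz)

lemma mulComp_int {T : ℝ} (hT : 0 < T) {a v : ℝ → ℝ} (ha : IntervalIntegrable a volume 0 T)
    (hv : ContinuousOn v (Icc 0 T)) : IntervalIntegrable (fun t => a t * v t) volume 0 T :=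
  ha.mul_continuousOn (by rwa [uIcc_of_le hT.le])

lemma bsol_small_zero {N : Bool} {T : ℝ} (hT : 0 < T) {a G u u' : ℝ → ℝ} {θ r γ : ℝ} (hθ : 0 < θ)
    (hθ1 : θ ≤ 1) (ha : IntervalIntegrable a volume 0 T) (hGc : Continuous G)
    (hG0 : ∀ s, 0 ≤ G s)
    (hlip : ∀ s ∈ Icc 0 r, ∀ s' ∈ Icc 0 r, |G s - G s'| ≤ γ * |s - s'|) (hγ : 0 ≤ γ)
    (hsm : γ * T * (∫ t in (0:ℝ)..T, |a t|) ^ 2 < - ∫ t in (0:ℝ)..T, a t)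
    (H : BSol N T (fun t => θ * (a t * G (u t))) u u')
    (hu : ∀ x ∈ Icc 0 T, u x ∈ Icc 0 r) : ∀ x ∈ Icc 0 T, G (u x) = 0 := by
  have hGu : ContinuousOn (fun x => G (u x)) (Icc 0 T) := hGc.comp_continuousOn H.contu
  obtain ⟨z, hz, hzm⟩ := isCompact_Icc.exists_isMaxOn ⟨0, ⟨le_rfl, hT.le⟩⟩ hGu
  set A := ∫ t in (0:ℝ)..T, |a t| with hA
  set M := G (u z) with hM
  have hA0 : 0 ≤ A := intervalIntegral.integral_nonneg hT.le fun t _ => abs_nonneg _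
  have hM0 : 0 ≤ M := hG0 _
  have hmax : ∀ x ∈ Icc 0 T, G (u x) ≤ M := fun x hx => hzm hx
  have hd : ∀ x ∈ Icc 0 T, |u' x| ≤ A * M := by
    intro x hx
    refine (H.deriv_le hT hx).trans ?_
    rw [hA, ← intervalIntegral.integral_mul_const]
    apply intervalIntegral.integral_mono_on hT.le H.2.1.abs (ha.abs.mul_const _)
    intro t ht
    rw [abs_mul, abs_mul, abs_of_pos hθ, abs_of_nonneg (hG0 _)]
    calc θ * (|a t| * G (u t)) ≤ 1 * (|a t| * M) := by
          gcongr
          · exact mul_nonneg (abs_nonneg _) (hG0 _)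
          · exact hmax t ht
      _ = _ := one_mul _
  have hl : ∀ x ∈ Icc 0 T, |G (u x) - M| ≤ γ * (A * M * T) := by
    intro x hx
    refine (hlip _ (hu x hx) _ (hu z hz)).trans (mul_le_mul_of_nonneg_left ?_ hγ)
    refine (H.1.lip hd hz hx).trans (mul_le_mul_of_nonneg_left ?_ (by positivity))
    rw [abs_le]
    constructor <;> linarith [hx.1, hx.2, hz.1, hz.2]
  have h0 := H.int hT
  rw [intervalIntegral.integral_const_mul] at h0
  have h1 : ∫ t in (0:ℝ)..T, a t * G (u t) = 0 := by
    rcases mul_eq_zero.1 h0 with h | h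
    · linarith
    · exact h
  have h2 : ∫ t in (0:ℝ)..T, a t * G (u t) ≤
      ∫ t in (0:ℝ)..T, (a t * M + |a t| * (γ * (A * M * T))) := by
    apply intervalIntegral.integral_mono_on hT.le (mulComp_int hT ha hGu)
      ((ha.mul_const _).add (ha.abs.mul_const _))
    intro t ht
    have := mul_le_mul_of_nonneg_left (hl t ht) (abs_nonneg (a t))
    rw [← abs_mul] at this
    have h3 := le_abs_self (a t * (G (u t) - M))
    linarith
  rw [intervalIntegral.integral_add (ha.mul_const _) (ha.abs.mul_const _),
    intervalIntegral.integral_mul_const, intervalIntegral.integral_mul_const, h1, ← hA] at h2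
  have h3 : 0 ≤ M * ((∫ t in (0:ℝ)..T, a t) + γ * T * A ^ 2) := by
    calc _ ≤ _ := h2
      _ = _ := by ring
  have hM1 : M ≤ 0 := by
    by_contra hc
    push Not at hc
    have := mul_neg_of_pos_of_neg hc (show (∫ t in (0:ℝ)..T, a t) + γ * T * A ^ 2 < 0 by linarith)
    linarith
  intro x hx
  exact le_antisymm ((hmax x hx).trans hM1) (hG0 _)

lemma deriv_left_nonneg {c d : ℝ} (hcd : c < d) {φ : ℝ → ℝ} {v : ℝ}
    (h : HasDerivWithinAt φ v (Icc c d) c) (h0 : φ c = 0) (hp : ∀ x ∈ Icc c d, 0 ≤ φ x) :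
    0 ≤ v := by
  have hne : (nhdsWithin (c:ℝ) (Icc c d \ {c})).NeBot := by
    have : Icc c d \ {c} = Ioc c d := Icc_sdiff_left
    rw [this, nhdsWithin_Ioc_eq_nhdsGT hcd]; infer_instance
  rw [hasDerivWithinAt_iff_tendsto_slope] at h
  apply ge_of_tendsto h
  filter_upwards [self_mem_nhdsWithin] with y hy
  rw [slope_def_field, h0, sub_zero]
  exact div_nonneg (hp y hy.1) (by linarith [hy.1.1])

lemma deriv_right_nonpos {c d : ℝ} (hcd : c < d) {φ : ℝ → ℝ} {v : ℝ}
    (h : HasDerivWithinAt φ v (Icc c d) d) (h0 : φ d = 0) (hp : ∀ x ∈ Icc c d, 0 ≤ φ x) :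
    v ≤ 0 := by
  have hne : (nhdsWithin (d:ℝ) (Icc c d \ {d})).NeBot := by
    have : Icc c d \ {d} = Ico c d := Icc_sdiff_right
    rw [this, nhdsWithin_Ico_eq_nhdsLT hcd]; infer_instance
  rw [hasDerivWithinAt_iff_tendsto_slope] at h
  apply le_of_tendsto h
  filter_upwards [self_mem_nhdsWithin] with y hy
  rw [slope_def_field, h0, sub_zero]
  exact div_nonpos_of_nonneg_of_nonpos (hp y hy.1) (by linarith [hy.1.2])

lemma concave_lb {c d : ℝ} (hcd : c < d) {u : ℝ → ℝ} (hu : ConcaveOn ℝ (Icc c d) u)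
    (hp : ∀ x ∈ Icc c d, 0 ≤ u x) {x z : ℝ} (hx : x ∈ Icc c d) (hz : z ∈ Icc c d) :
    u z * ((x - c) * (d - x)) ≤ u x * (d - c) ^ 2 := by
  have hc : c ∈ Icc c d := ⟨le_rfl, hcd.le⟩
  have hd : d ∈ Icc c d := ⟨hcd.le, le_rfl⟩
  have hz0 := hp z hz
  have hx0 := hp x hx
  have e1 : 0 ≤ x - c := by linarith [hx.1]
  have e2 : 0 ≤ d - x := by linarith [hx.2]
  rcases le_total x z with hxz | hxz
  · rcases eq_or_lt_of_le hz.1 with h | h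
    · have : x = c := le_antisymm (by linarith) hx.1
      rw [this]; simp; have := hp c hc; positivity
    have h1 : 0 < z - c := by linarith
    have := hu.2 hc hz
      (show (0:ℝ) ≤ (z - x) / (z - c) from div_nonneg (by linarith) h1.le)
      (show (0:ℝ) ≤ (x - c) / (z - c) from div_nonneg e1 h1.le) (by field_simp; ring)
    have e : ((z - x) / (z - c)) • c + ((x - c) / (z - c)) • z = x := by
      simp only [smul_eq_mul]; field_simp; ring
    rw [e] at this
    simp only [smul_eq_mul] at this
    have h2 : (x - c) / (z - c) * u z ≤ u x := by
      have : 0 ≤ (z - x) / (z - c) * u c :=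
        mul_nonneg (div_nonneg (by linarith) h1.le) (hp c hc)
      linarith
    rw [div_mul_eq_mul_div, div_le_iff₀ h1] at h2
    calc u z * ((x - c) * (d - x)) = (x - c) * u z * (d - x) := by ring
      _ ≤ u x * (z - c) * (d - x) := by gcongr
      _ ≤ u x * (d - c) * (d - c) := by
          have := hz.2
          have := hx.1
          gcongr
      _ = _ := by ring
  · rcases eq_or_lt_of_le hz.2 with h | h
    · have : x = d := le_antisymm hx.2 (by linarith)
      rw [this]; simp; have := hp d hd; positivity
    have h1 : 0 < d - z := by linarith
    have := hu.2 hd hz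
      (show (0:ℝ) ≤ (x - z) / (d - z) from div_nonneg (by linarith) h1.le)
      (show (0:ℝ) ≤ (d - x) / (d - z) from div_nonneg e2 h1.le) (by field_simp; ring)
    have e : ((x - z) / (d - z)) • d + ((d - x) / (d - z)) • z = x := by
      simp only [smul_eq_mul]; field_simp; ring
    rw [e] at this
    simp only [smul_eq_mul] at this
    have h2 : (d - x) / (d - z) * u z ≤ u x := by
      have : 0 ≤ (x - z) / (d - z) * u d :=
        mul_nonneg (div_nonneg (by linarith) h1.le) (hp d hd)
      linarith
    rw [div_mul_eq_mul_div, div_le_iff₀ h1] at h2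
    calc u z * ((x - c) * (d - x)) = (d - x) * u z * (x - c) := by ring
      _ ≤ u x * (d - z) * (x - c) := by gcongr
      _ ≤ u x * (d - c) * (d - c) := by
          have := hz.1
          have := hx.2
          gcongr
      _ = _ := by ring

lemma apriori_I {σ τ : ℝ} (hστ : σ ≤ τ) {a : ℝ → ℝ} (ha : IntervalIntegrable a volume σ τ)
    (hapos : ∀ᵐ x ∂(volume.restrict (Icc σ τ)), 0 ≤ a x)
    (hane0 : ¬ (∀ᵐ x ∂(volume.restrict (Icc σ τ)), a x = 0))
    {lam lam' C : ℝ} (hl : lam < lam')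
    (heig : DirichletEigenpair a σ τ lam) :
    ∃ R : ℝ, ∀ u u' p : ℝ → ℝ, (∀ x ∈ Icc σ τ, HasDerivWithinAt u (u' x) (Icc σ τ) x) →
      ContinuousOn u' (Icc σ τ) → IntervalIntegrable p volume σ τ →
      (∀ x ∈ Icc σ τ, u' x = u' σ - ∫ t in σ..x, p t) →
      (∀ x ∈ Icc σ τ, 0 ≤ u x) → (∀ᵐ x ∂(volume.restrict (Icc σ τ)), 0 ≤ p x) →
      (∀ᵐ x ∂(volume.restrict (Icc σ τ)), a x * (lam' * u x - C) ≤ p x) →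
      ∀ x ∈ Icc σ τ, u x ≤ R := by
  have hlt : σ < τ := by
    rcases eq_or_lt_of_le hστ with h | h
    · exfalso; apply hane0
      rw [h, Icc_self, Measure.restrict_singleton]; simp
    · exact h
  obtain ⟨φ, φ', hφd, hφ'c, hφp, hφ0, hφ1, hφe⟩ := heig
  have hφc : ContinuousOn φ (Icc σ τ) := fun x hx => (hφd x hx).continuousWithinAt
  have hφn : ∀ x ∈ Icc σ τ, 0 ≤ φ x := by
    intro x hx
    rcases eq_or_lt_of_le hx.1 with h | h
    · rw [← h, hφ0]
    rcases eq_or_lt_of_le hx.2 with h' | h'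
    · rw [h', hφ1]
    exact (hφp x ⟨h, h'⟩).le
  have hdl : 0 ≤ φ' σ := deriv_left_nonneg hlt (hφd σ ⟨le_rfl, hστ⟩) hφ0 hφn
  have hdr : φ' τ ≤ 0 := deriv_right_nonpos hlt (hφd τ ⟨hστ, le_rfl⟩) hφ1 hφn
  have hmul : ∀ {b v : ℝ → ℝ}, IntervalIntegrable b volume σ τ → ContinuousOn v (Icc σ τ) →
      IntervalIntegrable (fun t => b t * v t) volume σ τ := fun hb hv =>
    hb.mul_continuousOn (by rwa [uIcc_of_le hστ])
  have aeIoc : ∀ {P : ℝ → Prop}, (∀ᵐ x ∂(volume.restrict (Icc σ τ)), P x) →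
      ∀ᵐ x ∂(volume.restrict (Ioc σ τ)), P x := fun h =>
    ae_restrict_of_ae_restrict_of_subset Ioc_subset_Icc_self h
  have haφ := hmul ha hφc
  set q : ℝ → ℝ := fun x => a x * φ x * ((x - σ) * (τ - x)) with hq
  have hqi : IntervalIntegrable q volume σ τ := hmul haφ (by fun_prop)
  have hqn : 0 ≤ᵐ[volume.restrict (Ioc σ τ)] q := by
    filter_upwards [aeIoc hapos, ae_restrict_mem measurableSet_Ioc] with x hx hx2
    have h1 := hφn x (Ioc_subset_Icc_self hx2)
    exact mul_nonneg (mul_nonneg hx h1) (mul_nonneg (by linarith [hx2.1]) (by linarith [hx2.2]))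
  have hQ : 0 < ∫ x in σ..τ, q x := by
    rw [intervalIntegral.integral_of_le hστ]
    apply lt_of_le_of_ne (integral_nonneg_of_ae hqn)
    intro h
    apply hane0
    rw [eq_comm, integral_eq_zero_iff_of_nonneg_ae hqn
      ((intervalIntegrable_iff_integrableOn_Ioc_of_le hστ).1 hqi)] at h
    rw [Measure.restrict_congr_set (Ioo_ae_eq_Icc (μ := volume)).symm]
    have h' := ae_restrict_of_ae_restrict_of_subset (μ := volume)
      (show Ioo σ τ ⊆ Ioc σ τ from Ioo_subset_Ioc_self) h
    filter_upwards [h', ae_restrict_mem measurableSet_Ioo] with x hx hx2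
    simp only [hq, Pi.zero_apply] at hx
    have h1 := hφp x hx2
    have h2 : 0 < (x - σ) * (τ - x) := mul_pos (by linarith [hx2.1]) (by linarith [hx2.2])
    rcases mul_eq_zero.1 hx with h | h
    · rcases mul_eq_zero.1 h with h | h
      · exact h
      · linarith
    · linarith
  set Q := ∫ x in σ..τ, q x with hQdef
  set κ := (lam' - lam) * Q / (τ - σ) ^ 2 with hκ
  have hτσ : 0 < τ - σ := by linarith
  have hκ0 : 0 < κ := by
    have : 0 < lam' - lam := by linarith
    positivity
  refine ⟨(C * ∫ x in σ..τ, a x * φ x) / κ, ?_⟩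
  intro u u' p hud hu'c hp hu' hu0 hp0 hpl
  have huc : ContinuousOn u (Icc σ τ) := fun x hx => (hud x hx).continuousWithinAt
  have hanti : AntitoneOn u' (Icc σ τ) := by
    intro x hx y hy hxy
    rw [hu' x hx, hu' y hy]
    have i1 : IntervalIntegrable p volume σ x :=
      hp.mono_set (by rw [uIcc_of_le hστ, uIcc_of_le hx.1]; exact Icc_subset_Icc le_rfl hx.2)
    have i2 : IntervalIntegrable p volume x y :=
      hp.mono_set (by rw [uIcc_of_le hστ, uIcc_of_le hxy]; exact Icc_subset_Icc hx.1 hy.2)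
    have := intervalIntegral.integral_add_adjacent_intervals i1 i2
    have h2 : 0 ≤ ∫ t in x..y, p t := by
      rw [intervalIntegral.integral_of_le hxy]
      apply integral_nonneg_of_ae
      exact ae_restrict_of_ae_restrict_of_subset
        ((Ioc_subset_Icc_self).trans (Icc_subset_Icc hx.1 hy.2)) hp0
    linarith
  have hda : ∀ x ∈ Ioo σ τ, HasDerivAt u (u' x) x := fun x hx =>
    (hud x (Ioo_subset_Icc_self hx)).hasDerivAt (Icc_mem_nhds hx.1 hx.2)
  have hconc : ConcaveOn ℝ (Icc σ τ) u := by
    apply AntitoneOn.concaveOn_of_deriv (convex_Icc _ _) huc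
    · rw [interior_Icc]
      exact fun x hx => (hda x hx).differentiableAt.differentiableWithinAt
    · rw [interior_Icc]
      intro x hx y hy hxy
      rw [(hda x hx).deriv, (hda y hy).deriv]
      exact hanti (Ioo_subset_Icc_self hx) (Ioo_subset_Icc_self hy) hxy
  have I1 := ibp hστ hp hu' hφd hφ'c
  have I2 := ibp hστ (p := fun t => lam * (a t * φ t)) (haφ.const_mul lam)
    (fun x hx => by rw [intervalIntegral.integral_const_mul]; exact hφe x hx) hud hu'c
  rw [hφ0, hφ1] at I1
  have e1 : ∫ x in σ..τ, φ' x * u' x = ∫ x in σ..τ, u' x * φ' x := by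
    congr 1; funext x; ring
  have haφu := hmul haφ huc
  have e2 : ∫ x in σ..τ, lam * (a x * φ x) * u x = lam * ∫ x in σ..τ, a x * φ x * u x := by
    rw [← intervalIntegral.integral_const_mul]; congr 1; funext x; ring
  rw [e1, e2] at I2
  have h3 : ∫ x in σ..τ, p x * φ x ≤ lam * ∫ x in σ..τ, a x * φ x * u x := by
    have m1 : φ' τ * u τ ≤ 0 := mul_nonpos_of_nonpos_of_nonneg hdr (hu0 τ ⟨hστ, le_rfl⟩)
    have m2 : 0 ≤ φ' σ * u σ := mul_nonneg hdl (hu0 σ ⟨le_rfl, hστ⟩)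
    linarith
  have h4 : ∫ x in σ..τ, (lam' * (a x * φ x * u x) - C * (a x * φ x)) ≤
      ∫ x in σ..τ, p x * φ x := by
    rw [intervalIntegral.integral_of_le hστ, intervalIntegral.integral_of_le hστ]
    apply integral_mono_ae
    · exact (intervalIntegrable_iff_integrableOn_Ioc_of_le hστ).1
        ((haφu.const_mul _).sub (haφ.const_mul _))
    · exact (intervalIntegrable_iff_integrableOn_Ioc_of_le hστ).1 (hmul hp hφc)
    · filter_upwards [aeIoc hpl, ae_restrict_mem measurableSet_Ioc] with x hx hx2
      have := mul_le_mul_of_nonneg_right hx (hφn x (Ioc_subset_Icc_self hx2))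
      linarith
  rw [intervalIntegral.integral_sub (haφu.const_mul _) (haφ.const_mul _),
    intervalIntegral.integral_const_mul, intervalIntegral.integral_const_mul] at h4
  intro z hz
  have h5 : u z / (τ - σ) ^ 2 * Q ≤ ∫ x in σ..τ, a x * φ x * u x := by
    rw [hQdef, ← intervalIntegral.integral_const_mul]
    rw [intervalIntegral.integral_of_le hστ, intervalIntegral.integral_of_le hστ]
    apply integral_mono_ae
    · exact (intervalIntegrable_iff_integrableOn_Ioc_of_le hστ).1 (hqi.const_mul _)
    · exact (intervalIntegrable_iff_integrableOn_Ioc_of_le hστ).1 haφu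
    · filter_upwards [aeIoc hapos, ae_restrict_mem measurableSet_Ioc] with x hx hx2
      have hx3 := Ioc_subset_Icc_self hx2
      have := concave_lb hlt hconc hu0 hx3 hz
      have h6 : u z / (τ - σ) ^ 2 * ((x - σ) * (τ - x)) ≤ u x := by
        rw [div_mul_eq_mul_div, div_le_iff₀ (by positivity)]; exact this
      have := mul_le_mul_of_nonneg_left h6 (mul_nonneg hx (hφn x hx3))
      simp only [hq]
      linarith
  rw [le_div_iff₀ hκ0]
  have h6 := mul_le_mul_of_nonneg_left h5 (show 0 ≤ lam' - lam by linarith)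
  have h7 : u z * κ = (lam' - lam) * (u z / (τ - σ) ^ 2 * Q) := by rw [hκ]; ring
  rw [h7]
  linarith

lemma isSol_of_integral {T : ℝ} (hT : 0 < T) {q u : ℝ → ℝ} (hq : IntervalIntegrable q volume 0 T)
    {u0 v0 : ℝ}
    (hu : ∀ x ∈ Icc 0 T, u x = u0 + v0 * x - ∫ s in (0:ℝ)..x, ∫ t in (0:ℝ)..s, q t) :
    IsSolOn T q u (fun x => v0 - ∫ t in (0:ℝ)..x, q t) := by
  have hc := continuousOn_prim hT hq
  refine ⟨?_, continuousOn_const.sub hc, fun x hx => by simp⟩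
  set w : ℝ → ℝ := IccExtend hT.le ((Icc 0 T).domRestrict (fun x => ∫ t in (0:ℝ)..x, q t)) with hw
  have hwc : Continuous w := (continuousOn_iff_continuous_domRestrict.1 hc).Icc_extend'
  have hwe : ∀ x ∈ Icc 0 T, w x = ∫ t in (0:ℝ)..x, q t := by
    intro x hx
    rw [hw, IccExtend_of_mem _ _ hx]; rfl
  intro x hx
  have h1 : HasDerivAt (fun x => u0 + v0 * x - ∫ s in (0:ℝ)..x, w s) (v0 - w x) x := by
    have e1 := (hwc.integral_hasStrictDerivAt 0 x).hasDerivAt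
    have e2 := ((hasDerivAt_id x).const_mul v0).const_add u0
    exact (e2.sub e1).congr_deriv (by simp)
  beta_reduce
  rw [← hwe x hx]
  refine h1.hasDerivWithinAt.congr ?_ ?_
  · intro y hy
    rw [hu y hy]
    congr 1
    apply intervalIntegral.integral_congr
    intro s hs
    rw [uIcc_of_le hy.1] at hs
    exact (hwe s ⟨hs.1, hs.2.trans hy.2⟩).symm
  · rw [hu x hx]
    congr 1
    apply intervalIntegral.integral_congr
    intro s hs
    rw [uIcc_of_le hx.1] at hs
    exact (hwe s ⟨hs.1, hs.2.trans hx.2⟩).symm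

lemma BSol.congr {N : Bool} {T : ℝ} (hT : 0 < T) {h h' u u' : ℝ → ℝ} (H : BSol N T h u u')
    (he : ∀ x ∈ Icc 0 T, h x = h' x) : BSol N T h' u u' := by
  obtain ⟨⟨h1, h2, h3⟩, h4, h5, h6⟩ := H
  refine ⟨⟨h1, h2, fun x hx => ?_⟩, ?_, h5, h6⟩
  · rw [h3 x hx]; congr 1
    apply intervalIntegral.integral_congr
    intro s hs
    rw [uIcc_of_le hx.1] at hs
    exact he s ⟨hs.1, hs.2.trans hx.2⟩
  · apply h4.congr
    intro s hs
    rw [uIoc_of_le hT.le] at hs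
    exact he s (Ioc_subset_Icc_self hs)

lemma apriori_glob {N : Bool} {T : ℝ} (hT : 0 < T) {a : ℝ → ℝ}
    (ha : IntervalIntegrable a volume 0 T)
    {m : ℕ} (hm : 0 < m) {σ τ : Fin m → ℝ}
    (hIT : ∀ i, 0 ≤ σ i ∧ σ i ≤ τ i ∧ τ i ≤ T)
    (hapos : ∀ i, ∀ᵐ x ∂(volume.restrict (Icc (σ i) (τ i))), 0 ≤ a x)
    (hane0 : ∀ i, ¬ (∀ᵐ x ∂(volume.restrict (Icc (σ i) (τ i))), a x = 0))
    (haneg : ∀ᵐ x ∂(volume.restrict (Icc (0:ℝ) T \ ⋃ i, Icc (σ i) (τ i))), a x ≤ 0)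
    {lam' C : ℝ}
    (heig : ∀ i, ∃ lam : ℝ, lam < lam' ∧ DirichletEigenpair a (σ i) (τ i) lam) :
    ∃ R : ℝ, 0 < R ∧ ∀ (G : ℝ → ℝ), (∀ s, 0 ≤ G s) → (∀ s ≤ 0, G s = 0) →
      (∀ s, 0 ≤ s → lam' * s - C ≤ G s) → ∀ ν, 0 ≤ ν → ∀ u u',
      BSol N T (fun t => a t * G (u t) + max (-u t) 0 + ν * max (a t) 0) u u' →
      ∀ x ∈ Icc 0 T, 0 ≤ u x ∧ u x ≤ R := by
  have hsub : ∀ i, Icc (σ i) (τ i) ⊆ Icc 0 T := fun i => Icc_subset_Icc (hIT i).1 (hIT i).2.2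
  have hl : ∀ i, σ i ∈ Icc 0 T := fun i => hsub i ⟨le_rfl, (hIT i).2.1⟩
  have hr : ∀ i, τ i ∈ Icc 0 T := fun i => hsub i ⟨(hIT i).2.1, le_rfl⟩
  have key : ∀ i, ∃ R : ℝ, ∀ u u' p : ℝ → ℝ,
      (∀ x ∈ Icc (σ i) (τ i), HasDerivWithinAt u (u' x) (Icc (σ i) (τ i)) x) →
      ContinuousOn u' (Icc (σ i) (τ i)) → IntervalIntegrable p volume (σ i) (τ i) →
      (∀ x ∈ Icc (σ i) (τ i), u' x = u' (σ i) - ∫ t in (σ i)..x, p t) →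
      (∀ x ∈ Icc (σ i) (τ i), 0 ≤ u x) →
      (∀ᵐ x ∂(volume.restrict (Icc (σ i) (τ i))), 0 ≤ p x) →
      (∀ᵐ x ∂(volume.restrict (Icc (σ i) (τ i))), a x * (lam' * u x - C) ≤ p x) →
      ∀ x ∈ Icc (σ i) (τ i), u x ≤ R := by
    intro i
    obtain ⟨lam, h1, h2⟩ := heig i
    exact apriori_I (hIT i).2.1 (intervalIntegrable_sub' ha (hl i) (hr i)) (hapos i) (hane0 i) h1 h2
  choose Ri hRi using key
  obtain ⟨R, hR⟩ : ∃ R, ∀ i, Ri i ≤ R :=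
    ⟨∑ i, |Ri i|, fun i => (le_abs_self _).trans
      (Finset.single_le_sum (f := fun i => |Ri i|) (fun i _ => abs_nonneg _) (Finset.mem_univ i))⟩
  refine ⟨max R 1, by positivity, ?_⟩
  intro G hG0 hGz hGl ν hν u u' H
  have hu0 : ∀ x ∈ Icc 0 T, 0 ≤ u x := by
    apply H.nonneg hT
    filter_upwards with x hx
    rw [hGz _ hx.le, max_eq_left (by linarith)]
    have : 0 ≤ ν * max (a x) 0 := mul_nonneg hν (le_max_right _ _)
    linarith
  have hI : ∀ i, ∀ x ∈ Icc (σ i) (τ i), u x ≤ max R 1 := by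
    intro i x hx
    refine (hRi i u u' _ (fun x hx => (H.1.1 x (hsub i hx)).mono (hsub i)) (H.1.2.1.mono (hsub i))
      (intervalIntegrable_sub' H.2.1 (hl i) (hr i))
      (fun x hx => H.1.diff H.2.1 (hl i) (hsub i hx)) (fun x hx => hu0 x (hsub i hx))
      ?_ ?_ x hx).trans ((hR i).trans (le_max_left _ _))
    · filter_upwards [hapos i] with x hx
      have := hG0 (u x)
      positivity
    · filter_upwards [hapos i, ae_restrict_mem measurableSet_Icc] with x hx hx2
      have h1 := mul_le_mul_of_nonneg_left (hGl (u x) (hu0 x (hsub i hx2))) hx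
      have h2 : 0 ≤ max (-u x) 0 := le_max_right _ _
      have h3 : 0 ≤ ν * max (a x) 0 := mul_nonneg hν (le_max_right _ _)
      linarith
  have hRR := H.le hT (max R 1) (by
    have hms : MeasurableSet (Icc (0:ℝ) T \ ⋃ i, Icc (σ i) (τ i)) :=
      measurableSet_Icc.diff (MeasurableSet.iUnion fun i => measurableSet_Icc)
    rw [ae_restrict_iff' hms] at haneg
    rw [ae_restrict_iff' measurableSet_Icc]
    filter_upwards [haneg] with x hx hx1 hx2
    have hxn : x ∉ ⋃ i, Icc (σ i) (τ i) := by
      intro hc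
      obtain ⟨i, hi⟩ := mem_iUnion.1 hc
      linarith [hI i x hi]
    have hax := hx ⟨hx1, hxn⟩
    rw [max_eq_right hax, max_eq_right (by linarith [hu0 x hx1])]
    have := mul_nonpos_of_nonpos_of_nonneg hax (hG0 (u x))
    linarith) ⟨σ ⟨0, hm⟩, hl _, hI _ _ ⟨le_rfl, (hIT _).2.1⟩⟩
  exact fun x hx => ⟨hu0 x hx, hRR x hx⟩

theorem prop_A (N : Bool) {T : ℝ} (hT : 0 < T) {a : ℝ → ℝ} (ha : IntervalIntegrable a volume 0 T)
    (ha2 : (∫ x in (0:ℝ)..T, a x) < 0) (hap : 0 < ∫ x in (0:ℝ)..T, max (a x) 0)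
    {G : ℝ → ℝ} {L : ℝ} (hL0 : 0 ≤ L) (hL : ∀ s s', |G s - G s'| ≤ L * |s - s'|)
    (hGn : ∀ s, 0 ≤ G s) (hGz : ∀ s ≤ 0, G s = 0) {r γ R : ℝ} (hr : 0 < r) (hγ : 0 ≤ γ)
    (hlip : ∀ s ∈ Icc 0 r, ∀ s' ∈ Icc 0 r, |G s - G s'| ≤ γ * |s - s'|)
    (hsm : γ * T * (∫ t in (0:ℝ)..T, |a t|) ^ 2 < - ∫ t in (0:ℝ)..T, a t)
    (hGp : ∀ s, 0 < s → s ≤ r → 0 < G s) (hR0 : 0 < R)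
    (hR : ∀ ν, 0 ≤ ν → ∀ u u',
      BSol N T (fun t => a t * G (u t) + max (-u t) 0 + ν * max (a t) 0) u u' →
      ∀ x ∈ Icc 0 T, 0 ≤ u x ∧ u x ≤ R) :
    ∃ u u', BSol N T (fun t => a t * G (u t)) u u' ∧ (∀ x ∈ Icc 0 T, 0 ≤ u x ∧ u x ≤ R) ∧
      ∃ x ∈ Icc 0 T, r < u x := by
  have hGc : Continuous G := by
    apply LipschitzWith.continuous (K := L.toNNReal)
    apply LipschitzWith.of_dist_le_mul
    intro x y
    rw [Real.dist_eq, Real.dist_eq, Real.coe_toNNReal _ hL0]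
    exact hL x y
  have hG0 : G 0 = 0 := hGz 0 le_rfl
  set f : ℝ → ℝ → ℝ := fun t s => a t * G s + max (-s) 0 with hf
  set k : ℝ → ℝ := fun t => L * |a t| + 1 with hk
  set b : ℝ → ℝ := fun t => max (a t) 0 with hb
  have hbi : IntervalIntegrable b volume 0 T := by
    have : b = fun t => (a t + |a t|) / 2 := by
      funext t
      rcases le_total 0 (a t) with h | h
      · simp [hb, h, abs_of_nonneg h]
      · simp [hb, h, abs_of_nonpos h]
    rw [this]
    exact (ha.add ha.abs).div_const 2
  have hb0 : ∀ t, 0 ≤ b t := fun t => le_max_right _ _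
  have hki : IntervalIntegrable k volume 0 T := (ha.abs.const_mul L).add intervalIntegrable_const
  have hk0 : ∀ t, 0 ≤ k t := fun t => by positivity
  have hfi : ∀ u, Continuous u → IntervalIntegrable (fun t => f t (u t)) volume 0 T := by
    intro u hu
    refine (mulComp_int hT ha (hGc.comp hu).continuousOn).add ?_
    exact Continuous.intervalIntegrable (by fun_prop) _ _
  have hfl : ∀ t s s', |f t s - f t s'| ≤ k t * |s - s'| := by
    intro t s s'
    have e1 : |max (-s) 0 - max (-s') 0| ≤ |s - s'| := by
      have := abs_max_sub_max_le_abs (-s) (-s') 0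
      rwa [neg_sub_neg, abs_sub_comm s' s] at this
    have e2 : |a t * (G s - G s')| ≤ |a t| * (L * |s - s'|) := by
      rw [abs_mul]; exact mul_le_mul_of_nonneg_left (hL _ _) (abs_nonneg _)
    have e3 : f t s - f t s' = a t * (G s - G s') + (max (-s) 0 - max (-s') 0) := by
      simp only [hf]; ring
    rw [e3]
    refine (abs_add_le _ _).trans ?_
    simp only [hk]
    linarith
  have hf0 : ∀ t, f t 0 = 0 := fun t => by simp [hf, hG0]
  obtain ⟨S, hSc, hS⟩ := ivp_exists hT f k b hki hk0 hfi hfl hbi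
  set U : unitInterval × ℝ × ℝ × ℝ → ℝ → ℝ := fun p => IccExtend hT.le (S p) with hU
  have hUc : ∀ p, Continuous (U p) := fun p => (S p).continuous.Icc_extend'
  set h : unitInterval × ℝ × ℝ × ℝ → ℝ → ℝ :=
    fun p t => p.1 * (f t (U p t) + p.2.1 * b t) with hh
  have hhi0 : ∀ p, IntervalIntegrable (fun t => f t (U p t) + p.2.1 * b t) volume 0 T := fun p =>
    (hfi _ (hUc p)).add (hbi.const_mul _)
  have hhi : ∀ p, IntervalIntegrable (h p) volume 0 T := fun p => (hhi0 p).const_mul _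
  have hUe : ∀ p, ∀ x ∈ Icc 0 T,
      U p x = p.2.2.1 + p.2.2.2 * x - ∫ s in (0:ℝ)..x, ∫ t in (0:ℝ)..s, h p t := by
    intro p x hx
    simp only [hU, hh]
    rw [IccExtend_of_mem _ _ hx, hS p ⟨x, hx⟩]
    congr 1
    rw [← intervalIntegral.integral_const_mul]
    congr 1; funext s
    rw [← intervalIntegral.integral_const_mul]
  set V : unitInterval × ℝ × ℝ × ℝ → ℝ → ℝ := fun p x => p.2.2.2 - ∫ t in (0:ℝ)..x, h p t with hV
  have hsol : ∀ p, IsSolOn T (h p) (U p) (V p) := fun p => isSol_of_integral hT (hhi p) (hUe p)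
  have z0 : (0:ℝ) ∈ Icc 0 T := ⟨le_rfl, hT.le⟩
  have zT : T ∈ Icc 0 T := ⟨hT.le, le_rfl⟩
  have hU0 : ∀ p, U p 0 = p.2.2.1 := fun p => by rw [hUe p 0 z0]; simp
  have hV0 : ∀ p, V p 0 = p.2.2.2 := fun p => by simp [hV]
  set Pz : unitInterval × ℝ × ℂ → unitInterval × ℝ × ℝ × ℝ :=
    fun q => (q.1, q.2.1, q.2.2.im, q.2.2.re) with hPz
  have hPc : Continuous Pz := by fun_prop
  set Φ : C(Icc (0:ℝ) T, ℝ) → ℝ := fun u => ∫ t in (0:ℝ)..T, f t (IccExtend hT.le u t) with hΦ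
  have hΦc : Continuous Φ := by
    have hK : 0 ≤ ∫ t in (0:ℝ)..T, k t := intervalIntegral.integral_nonneg hT.le fun t _ => hk0 t
    apply LipschitzWith.continuous (K := (∫ t in (0:ℝ)..T, k t).toNNReal)
    apply LipschitzWith.of_dist_le_mul
    intro u v
    rw [Real.coe_toNNReal _ hK, Real.dist_eq, hΦ]
    simp only
    rw [← intervalIntegral.integral_sub (hfi _ u.continuous.Icc_extend')
      (hfi _ v.continuous.Icc_extend'), ← intervalIntegral.integral_mul_const]
    refine (intervalIntegral.abs_integral_le_integral_abs hT.le).trans ?_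
    apply intervalIntegral.integral_mono_on hT.le
      ((hfi _ u.continuous.Icc_extend').sub (hfi _ v.continuous.Icc_extend')).abs
      (hki.mul_const _)
    intro t ht
    refine (hfl _ _ _).trans (mul_le_mul_of_nonneg_left ?_ (hk0 t))
    rw [IccExtend_of_mem _ _ ht, IccExtend_of_mem _ _ ht, ← Real.dist_eq]
    exact ContinuousMap.dist_apply_le_dist _
  set F : unitInterval × ℝ × ℂ → ℂ := fun q =>
    (((if N = true then q.2.2.re else S (Pz q) ⟨T, zT⟩ - q.2.2.im : ℝ)) : ℂ) +
    ((-(Φ (S (Pz q)) + q.2.1 * ∫ t in (0:ℝ)..T, b t) : ℝ) : ℂ) * Complex.I with hF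
  have hFc : Continuous F := by
    have e1 : Continuous fun q => S (Pz q) := hSc.comp hPc
    have e2 : Continuous fun q => S (Pz q) ⟨T, zT⟩ := (continuous_eval_const _).comp e1
    have e3 : Continuous fun q => Φ (S (Pz q)) := hΦc.comp e1
    simp only [hF]
    split_ifs <;> fun_prop
  have hFre : ∀ q, (F q).re = if N = true then q.2.2.re else S (Pz q) ⟨T, zT⟩ - q.2.2.im := by
    intro q; simp [hF]
  have hFim : ∀ q, (F q).im = -(Φ (S (Pz q)) + q.2.1 * ∫ t in (0:ℝ)..T, b t) := by
    intro q; simp [hF]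
  have hbs : ∀ q, F q = 0 → BSol N T (h (Pz q)) (U (Pz q)) (V (Pz q)) := by
    intro q hq
    have e1 := hFre q
    have e2 := hFim q
    rw [hq] at e1 e2
    simp only [Complex.zero_re, Complex.zero_im] at e1 e2
    have e3 : ∫ t in (0:ℝ)..T, h (Pz q) t = 0 := by
      simp only [hh]
      rw [intervalIntegral.integral_const_mul, intervalIntegral.integral_add (hfi _ (hUc _))
        (hbi.const_mul _), intervalIntegral.integral_const_mul]
      have : (∫ t in (0:ℝ)..T, f t (U (Pz q) t)) = Φ (S (Pz q)) := rfl
      rw [this]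
      have : Φ (S (Pz q)) + (Pz q).2.1 * ∫ t in (0:ℝ)..T, b t = 0 := by
        simp only [hPz]; simp only [hPz] at e2; linarith
      rw [this, mul_zero]
    refine ⟨hsol _, hhi _, ?_, ?_⟩
    · rw [hV0]; simp only [hV]; rw [e3, sub_zero]
    · split_ifs at e1 ⊢
      · rw [hV0]; exact e1.symm
      · rw [hU0]
        have : U (Pz q) T = S (Pz q) ⟨T, zT⟩ := IccExtend_of_mem _ _ zT
        rw [this]
        have : (Pz q).2.2.1 = q.2.2.im := rfl
        linarith
  -- small solutions vanish
  have hsmall : ∀ (θ : unitInterval) (z : ℂ), 0 < (θ : ℝ) → F (θ, 0, z) = 0 →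
      (∀ x ∈ Icc 0 T, U (Pz (θ, 0, z)) x ≤ r) → z = 0 := by
    intro θ z hθ hq hx
    have H := hbs _ hq
    set p := Pz (θ, 0, z) with hp
    have hpe : ∀ t, h p t = θ * (a t * G (U p t) + max (-U p t) 0) := by
      intro t; simp [hh, hp, hPz, hf]
    have hn : ∀ x ∈ Icc 0 T, 0 ≤ U p x := by
      apply H.nonneg hT
      filter_upwards with x hx
      rw [hpe, hGz _ hx.le, max_eq_left (by linarith), mul_zero, zero_add]
      exact mul_pos hθ (by linarith)
    have H2 : BSol N T (fun t => θ * (a t * G (U p t))) (U p) (V p) := by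
      apply H.congr hT
      intro x hx
      rw [hpe, max_eq_right (by linarith [hn x hx]), add_zero]
    have h3 := bsol_small_zero hT hθ θ.2.2 ha hGc hGn hlip hγ hsm H2
      (fun x hx' => ⟨hn x hx', hx x hx'⟩)
    have h4 : U p 0 = 0 := by
      by_contra hc
      have := hGp (U p 0) (lt_of_le_of_ne (hn 0 z0) (Ne.symm hc)) (hx 0 z0)
      linarith [h3 0 z0]
    have h5 : |V p 0| ≤ 0 := by
      refine (H2.deriv_le hT z0).trans (le_of_eq ?_)
      rw [intervalIntegral.integral_congr (g := fun _ => (0:ℝ))]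
      · simp
      · intro t ht
        rw [uIcc_of_le hT.le] at ht
        simp only [h3 t ht, mul_zero, abs_zero]
    rw [hU0] at h4
    rw [hV0] at h5
    apply Complex.ext
    · exact abs_nonpos_iff.1 h5
    · exact h4
  -- choice of small radius
  have hS0 : ∀ θ : unitInterval, S (Pz (θ, 0, 0)) = 0 := by
    intro θ
    set p := Pz (θ, 0, 0) with hp
    have := uniq_zero hT (hsol p) (hhi p) hki hk0 (by
      intro x hx
      have e : h p x = θ * (f x (U p x) - f x 0) := by simp [hh, hp, hPz, hf0]
      rw [e, abs_mul, abs_of_nonneg θ.2.1]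
      have := hfl x (U p x) 0
      rw [sub_zero] at this
      calc (θ:ℝ) * |f x (U p x) - f x 0| ≤ 1 * |f x (U p x) - f x 0| :=
            mul_le_mul_of_nonneg_right θ.2.2 (abs_nonneg _)
        _ ≤ _ := by rw [one_mul]; exact this) z0 (by rw [hU0]; simp [hp, hPz]) (by rw [hV0]; simp [hp, hPz])
    ext x
    have := this x x.2
    simp only [hU] at this
    rw [IccExtend_of_mem _ _ x.2] at this
    exact this
  obtain ⟨ρ, hρ0, hρr, hρ⟩ : ∃ ρ : ℝ, 0 < ρ ∧ ρ ≤ r ∧ ∀ z : ℂ, ‖z‖ = ρ → ∀ θ : unitInterval,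
      ∀ x ∈ Icc 0 T, U (Pz (θ, 0, z)) x ≤ r := by
    have := IsCompact.eventually_forall_of_forall_eventually (x₀ := (0:ℂ)) (K := (univ : Set unitInterval))
      isCompact_univ (P := fun z θ => dist (S (Pz (θ, 0, z))) 0 < r) (by
        intro θ _
        have hc : Continuous fun w : ℂ × unitInterval => dist (S (Pz (w.2, 0, w.1))) 0 :=
          (hSc.comp (hPc.comp (by fun_prop))).dist continuous_const
        apply hc.continuousAt.eventually_lt continuousAt_const
        simp only
        rw [hS0, dist_self]; exact hr)
    rw [Metric.eventually_nhds_iff] at this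
    obtain ⟨ε, hε, hb⟩ := this
    refine ⟨min (ε / 2) r, by positivity, min_le_right _ _, ?_⟩
    intro z hz θ x hx
    have h1 := hb (y := z) (by
      rw [dist_zero_right, hz]
      have := min_le_left (ε / 2) r
      linarith) θ (mem_univ _)
    have h2 := (ContinuousMap.dist_apply_le_dist (f := S (Pz (θ, 0, z))) (g := 0) ⟨x, hx⟩)
    simp only [hU]
    rw [IccExtend_of_mem _ _ hx]
    rw [ContinuousMap.zero_apply, dist_zero_right, Real.norm_eq_abs] at h2
    linarith [le_abs_self (S (Pz (θ, 0, z)) ⟨x, hx⟩)]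
  -- the averaged map
  have hA : ∀ z : ℂ, ‖z‖ = ρ → ∀ s : ℝ, 0 ≤ s → s ≤ 1 →
      (1 - s : ℂ) * z + s * F (0, 0, z) ≠ 0 := by
    intro z hz s hs0 hs1 hc
    have c1 := congrArg Complex.re hc
    have c2 := congrArg Complex.im hc
    have hSx : ∀ x : Icc (0:ℝ) T, S (Pz (0, 0, z)) x = z.im + z.re * x := by
      intro x; rw [hS]; simp [hPz]
    have e1 : (1 - s : ℂ) = ((1 - s : ℝ) : ℂ) := by push_cast; rfl
    rw [e1] at c1 c2
    simp only [Complex.add_re, Complex.add_im, Complex.re_ofReal_mul, Complex.im_ofReal_mul,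
      Complex.zero_re, Complex.zero_im] at c1 c2
    rw [hFre, hSx] at c1
    rw [hFim] at c2
    have hre : z.re = 0 := by
      simp only at c1
      split_ifs at c1
      · linarith
      · have : z.re * ((1 - s) + s * T) = 0 := by linarith
        rcases mul_eq_zero.1 this with h | h
        · exact h
        · exfalso
          rcases eq_or_lt_of_le hs0 with h' | h'
          · rw [← h'] at h; linarith
          · have := mul_pos h' hT
            linarith
    have hUz : ∀ t ∈ Icc 0 T, IccExtend hT.le (S (Pz (0, 0, z))) t = z.im := by
      intro t ht
      rw [IccExtend_of_mem _ _ ht, hSx, hre]; simp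
    have hΦz : Φ (S (Pz (0, 0, z))) = (∫ t in (0:ℝ)..T, a t) * G z.im + T * max (-z.im) 0 := by
      simp only [hΦ]
      rw [intervalIntegral.integral_congr (g := fun t => a t * G z.im + max (-z.im) 0)]
      · rw [intervalIntegral.integral_add (ha.mul_const _) intervalIntegrable_const,
          intervalIntegral.integral_mul_const]
        simp
      · intro t ht
        rw [uIcc_of_le hT.le] at ht
        simp only [hf]
        rw [hUz t ht]
    rw [hΦz] at c2
    simp only [zero_mul, add_zero] at c2
    have hzim : |z.im| = ρ := by
      have : z = (z.im : ℂ) * Complex.I := by apply Complex.ext <;> simp [hre]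
      rw [this] at hz
      simpa using hz
    rcases lt_trichotomy z.im 0 with hi | hi | hi
    · rw [hGz _ hi.le, max_eq_left (by linarith), mul_zero, zero_add] at c2
      have : z.im * ((1 - s) + s * T) = 0 := by linarith
      rcases mul_eq_zero.1 this with h | h
      · linarith
      · rcases eq_or_lt_of_le hs0 with h' | h'
        · rw [← h'] at h; linarith
        · have := mul_pos h' hT
          linarith
    · rw [hi, abs_zero] at hzim; linarith
    · rw [max_eq_right (by linarith), mul_zero, add_zero] at c2
      have hg := hGp z.im hi (by rw [abs_of_pos hi] at hzim; linarith)
      have h5 : 0 < -((∫ t in (0:ℝ)..T, a t) * G z.im) := by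
        have := mul_neg_of_neg_of_pos ha2 hg
        linarith
      rcases eq_or_lt_of_le hs0 with h' | h'
      · rw [← h'] at c2; linarith
      · have := mul_pos h' h5
        have : 0 ≤ (1 - s) * z.im := mul_nonneg (by linarith) hi.le
        linarith
  set A := ∫ t in (0:ℝ)..T, |a t| with hAdef
  set B := ∫ t in (0:ℝ)..T, b t with hBdef
  have hA0 : 0 ≤ A := intervalIntegral.integral_nonneg hT.le fun t _ => abs_nonneg _
  -- bounds at θ = 1
  have hone : ∀ (ν : ℝ) (z : ℂ), 0 ≤ ν → F (1, ν, z) = 0 →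
      (∀ x ∈ Icc 0 T, 0 ≤ U (Pz (1, ν, z)) x ∧ U (Pz (1, ν, z)) x ≤ R) ∧
      BSol N T (fun t => a t * G (U (Pz (1, ν, z)) t) + ν * b t) (U (Pz (1, ν, z)))
        (V (Pz (1, ν, z))) ∧ ν * B ≤ A * (L * R) := by
    intro ν z hν hq
    have H := hbs _ hq
    set p := Pz (1, ν, z) with hp
    have hpe : ∀ t, h p t = a t * G (U p t) + max (-U p t) 0 + ν * max (a t) 0 := by
      intro t; simp [hh, hp, hPz, hf, hb]
    have h1 := hR ν hν (U p) (V p) (H.congr hT fun x _ => hpe x)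
    have H2 : BSol N T (fun t => a t * G (U p t) + ν * b t) (U p) (V p) := by
      apply H.congr hT
      intro x hx
      rw [hpe, max_eq_right (by linarith [(h1 x hx).1]), add_zero]
    refine ⟨h1, H2, ?_⟩
    have h2 := H2.int hT
    have hGi : IntervalIntegrable (fun t => a t * G (U p t)) volume 0 T :=
      mulComp_int hT ha (hGc.comp (hUc p)).continuousOn
    rw [intervalIntegral.integral_add hGi (hbi.const_mul _),
      intervalIntegral.integral_const_mul, ← hBdef] at h2
    have h3 : ν * B = - ∫ t in (0:ℝ)..T, a t * G (U p t) := by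
      linarith
    rw [h3, ← intervalIntegral.integral_neg, hAdef, ← intervalIntegral.integral_mul_const]
    apply intervalIntegral.integral_mono_on hT.le hGi.neg (ha.abs.mul_const _)
    intro t ht
    have h4 : G (U p t) ≤ L * R := by
      have := hL (U p t) 0
      rw [hG0, sub_zero, sub_zero, abs_of_nonneg (hGn _), abs_of_nonneg (h1 t ht).1] at this
      exact this.trans (mul_le_mul_of_nonneg_left (h1 t ht).2 hL0)
    have h5 := mul_le_mul_of_nonneg_left h4 (abs_nonneg (a t))
    have h6 := mul_le_mul_of_nonneg_right (neg_le_abs (a t)) (hGn (U p t))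
    show -(a t * G (U p t)) ≤ |a t| * (L * R)
    linarith
  have hLR : 0 ≤ A * (L * R) := by positivity
  obtain ⟨z, hz1, -, hz3⟩ := topo_zero F hFc ρ (2 * (A * (L * R)) + R + ρ + 1)
    (A * (L * R) / B + 1) hρ0 (by linarith) (by positivity) hA (by
      intro z hz θ hq
      rcases eq_or_lt_of_le θ.2.1 with h0 | h0
      · have : θ = 0 := Subtype.ext h0.symm
        subst this
        have := hA z hz 1 zero_le_one le_rfl
        simp [hq] at this
      · have := hsmall θ z h0 hq (hρ z hz θ)
        rw [this, norm_zero] at hz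
        linarith) (by
      intro z hz ν hν hq
      obtain ⟨h1, h2, h3⟩ := hone ν z hν hq
      have h4 := h2.deriv_le hT z0
      have h5 : ∫ t in (0:ℝ)..T, |a t * G (U (Pz (1, ν, z)) t) + ν * b t| ≤
          ∫ t in (0:ℝ)..T, (|a t| * (L * R) + ν * b t) := by
        apply intervalIntegral.integral_mono_on hT.le h2.2.1.abs
          ((ha.abs.mul_const _).add (hbi.const_mul _))
        intro t ht
        have h4 : G (U (Pz (1, ν, z)) t) ≤ L * R := by
          have := hL (U (Pz (1, ν, z)) t) 0
          rw [hG0, sub_zero, sub_zero, abs_of_nonneg (hGn _), abs_of_nonneg (h1 t ht).1] at this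
          exact this.trans (mul_le_mul_of_nonneg_left (h1 t ht).2 hL0)
        refine (abs_add_le _ _).trans ?_
        rw [abs_mul, abs_of_nonneg (hGn _), abs_of_nonneg (mul_nonneg hν (hb0 t))]
        have := mul_le_mul_of_nonneg_left h4 (abs_nonneg (a t))
        linarith
      rw [intervalIntegral.integral_add (ha.abs.mul_const _) (hbi.const_mul _),
        intervalIntegral.integral_const_mul, intervalIntegral.integral_mul_const, ← hAdef,
        ← hBdef] at h5
      have h6 := h1 0 z0
      rw [hV0] at h4
      rw [hU0] at h6
      have e1 : (Pz (1, ν, z)).2.2.2 = z.re := rfl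
      have e2 : (Pz (1, ν, z)).2.2.1 = z.im := rfl
      rw [e1] at h4
      rw [e2] at h6
      have h7 := Complex.norm_le_abs_re_add_abs_im z
      rw [abs_of_nonneg h6.1, hz] at h7
      linarith) (by
      intro z hq
      obtain ⟨h1, h2, h3⟩ := hone _ z (by positivity) hq
      have : (A * (L * R) / B + 1) * B = A * (L * R) + B := by field_simp
      rw [this] at h3
      linarith)
  obtain ⟨h1, h2, h3⟩ := hone 0 z le_rfl hz3
  refine ⟨_, _, h2.congr hT (fun x _ => by simp), h1, ?_⟩
  by_contra hc
  push Not at hc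
  have := hsmall 1 z (by simp) hz3 hc
  rw [this, norm_zero] at hz1
  linarith

lemma BSol.formula {N : Bool} {T : ℝ} {h u u' : ℝ → ℝ} (H : BSol N T h u u')
    {x : ℝ} (hx : x ∈ Icc 0 T) :
    u x = u 0 + u' 0 * x - ∫ s in (0:ℝ)..x, ∫ t in (0:ℝ)..s, h t := by
  have hT : 0 ≤ T := hx.1.trans hx.2
  have hsub : Icc 0 x ⊆ Icc 0 T := Icc_subset_Icc le_rfl hx.2
  have i1 : IntervalIntegrable u' volume 0 x :=
    ContinuousOn.intervalIntegrable (by rw [uIcc_of_le hx.1]; exact H.1.2.1.mono hsub)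
  have h1 := intervalIntegral.integral_eq_sub_of_hasDerivAt_of_le hx.1 (H.contu.mono hsub)
    (fun y hy => (H.1.1 y (hsub (Ioo_subset_Icc_self hy))).hasDerivAt
      (Icc_mem_nhds hy.1 (hy.2.trans_le hx.2))) i1
  have h2 : ∫ s in (0:ℝ)..x, ∫ t in (0:ℝ)..s, h t = ∫ s in (0:ℝ)..x, (u' 0 - u' s) := by
    apply intervalIntegral.integral_congr
    intro s hs
    rw [uIcc_of_le hx.1] at hs
    have := H.1.2.2 s (hsub hs)
    simp only
    linarith
  rw [h2, intervalIntegral.integral_sub intervalIntegrable_const i1, h1]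
  simp
  ring

lemma limit_sol {N : Bool} {T : ℝ} (hT : 0 < T) {a : ℝ → ℝ} (ha : IntervalIntegrable a volume 0 T)
    {Gn : ℕ → ℝ → ℝ} {g : ℝ → ℝ} {M R r : ℝ} (hr : 0 < r) (hR : 0 ≤ R) (hM : 0 ≤ M)
    (hGM : ∀ n s, 0 ≤ s → s ≤ R → |Gn n s| ≤ M) (hg : ContinuousOn g (Ici 0))
    (hconv : ∀ φ : ℕ → ℕ, StrictMono φ → ∀ (sn : ℕ → ℝ) (s : ℝ), (∀ n, 0 ≤ sn n) →
      Tendsto sn atTop (nhds s) → Tendsto (fun n => Gn (φ n) (sn n)) atTop (nhds (g s)))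
    (hsol : ∀ n, ∃ u u', BSol N T (fun t => a t * Gn n (u t)) u u' ∧
      (∀ x ∈ Icc 0 T, 0 ≤ u x ∧ u x ≤ R) ∧ ∃ x ∈ Icc 0 T, r < u x) :
    ∃ u u', BSol N T (fun t => a t * g (u t)) u u' ∧
      (∀ x ∈ Icc 0 T, 0 ≤ u x ∧ u x ≤ R) ∧ ∃ x ∈ Icc 0 T, u x ≠ 0 := by
  choose u u' hB hb xr hxr hxr2 using hsol
  set A := ∫ t in (0:ℝ)..T, |a t| with hA
  have hA0 : 0 ≤ A := intervalIntegral.integral_nonneg hT.le fun t _ => abs_nonneg _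
  set K := A * M with hK
  have hK0 : 0 ≤ K := by positivity
  have z0 : (0:ℝ) ∈ Icc 0 T := ⟨le_rfl, hT.le⟩
  have zT : T ∈ Icc 0 T := ⟨hT.le, le_rfl⟩
  have hbd : ∀ n, ∀ t ∈ Icc 0 T, |a t * Gn n (u n t)| ≤ |a t| * M := by
    intro n t ht
    rw [abs_mul]
    exact mul_le_mul_of_nonneg_left (hGM n _ (hb n t ht).1 (hb n t ht).2) (abs_nonneg _)
  have hd : ∀ n, ∀ x ∈ Icc 0 T, |u' n x| ≤ K := by
    intro n x hx
    refine ((hB n).deriv_le hT hx).trans ?_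
    rw [hK, hA, ← intervalIntegral.integral_mul_const]
    exact intervalIntegral.integral_mono_on hT.le (hB n).2.1.abs (ha.abs.mul_const _) (hbd n)
  set I := Icc (0:ℝ) T with hI
  set F : ℕ → BoundedContinuousFunction I ℝ := fun n =>
    BoundedContinuousFunction.mkOfCompact
      ⟨I.domRestrict (u n), continuousOn_iff_continuous_domRestrict.1 (hB n).contu⟩ with hF
  have hFv : ∀ n (x : I), F n x = u n x := fun n x => rfl
  set S : Set (BoundedContinuousFunction I ℝ) :=
    {f | (∀ x, f x ∈ Icc 0 R) ∧ LipschitzWith K.toNNReal f} with hS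
  have hcomp : IsCompact (closure S) := by
    apply BoundedContinuousFunction.arzela_ascoli (Icc 0 R) isCompact_Icc
    · intro f x hf; exact hf.1 x
    · exact (LipschitzWith.uniformEquicontinuous (fun f : S => ⇑(f : BoundedContinuousFunction I ℝ))
        K.toNNReal (fun f => f.2.2)).equicontinuous
  have hFS : ∀ n, F n ∈ S := by
    intro n
    refine ⟨fun x => hb n x x.2, ?_⟩
    apply LipschitzWith.of_dist_le_mul
    intro x y
    rw [Real.coe_toNNReal _ hK0, hFv, hFv, Real.dist_eq, Subtype.dist_eq, Real.dist_eq]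
    exact (hB n).1.lip (hd n) y.2 x.2
  have hcomp2 : IsCompact (closure S ×ˢ Icc (-K) K) := hcomp.prod isCompact_Icc
  obtain ⟨⟨v, v0⟩, hv, φ, hφ, hlim⟩ := hcomp2.tendsto_subseq (x := fun n => (F n, u' n 0))
    (fun n => ⟨subset_closure (hFS n), abs_le.1 (hd n 0 z0)⟩)
  have hl1 : Tendsto (fun n => F (φ n)) atTop (nhds v) := (continuous_fst.tendsto _).comp hlim
  have hl2 : Tendsto (fun n => u' (φ n) 0) atTop (nhds v0) := (continuous_snd.tendsto _).comp hlim
  set w : ℝ → ℝ := IccExtend hT.le v with hw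
  have hwc : Continuous w := v.continuous.Icc_extend'
  have hpt : ∀ x ∈ I, Tendsto (fun n => u (φ n) x) atTop (nhds (w x)) := by
    intro x hx
    rw [hw, IccExtend_of_mem _ _ hx]
    exact ((continuous_eval_const (F := BoundedContinuousFunction I ℝ) (⟨x, hx⟩ : I)).tendsto v).comp hl1
  have hwb : ∀ x ∈ I, 0 ≤ w x ∧ w x ≤ R := by
    intro x hx
    exact ⟨ge_of_tendsto' (hpt x hx) fun n => (hb _ x hx).1,
      le_of_tendsto' (hpt x hx) fun n => (hb _ x hx).2⟩
  set q : ℝ → ℝ := fun t => a t * g (w t) with hq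
  have hqi : IntervalIntegrable q volume 0 T :=
    mulComp_int hT ha (hg.comp hwc.continuousOn fun x hx => (hwb x hx).1)
  have hqpt : ∀ t ∈ I, Tendsto (fun n => a t * Gn (φ n) (u (φ n) t)) atTop (nhds (q t)) := by
    intro t ht
    exact (hconv φ hφ _ _ (fun n => (hb _ t ht).1) (hpt t ht)).const_mul (a t)
  have hint : ∀ x ∈ I, Tendsto (fun n => ∫ t in (0:ℝ)..x, a t * Gn (φ n) (u (φ n) t)) atTop
      (nhds (∫ t in (0:ℝ)..x, q t)) := by
    intro x hx
    apply intervalIntegral.tendsto_integral_filter_of_dominated_convergence (fun t => |a t| * M)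
    · filter_upwards with n
      have := (intervalIntegrable_sub' (hB (φ n)).2.1 z0 hx)
      exact (intervalIntegrable_iff.1 this).aestronglyMeasurable
    · filter_upwards with n
      filter_upwards with t ht
      rw [uIoc_of_le hx.1] at ht
      exact hbd _ t ⟨ht.1.le, ht.2.trans hx.2⟩
    · exact intervalIntegrable_sub' (ha.abs.mul_const _) z0 hx
    · filter_upwards with t ht
      rw [uIoc_of_le hx.1] at ht
      exact hqpt t ⟨ht.1.le, ht.2.trans hx.2⟩
  have hint2 : ∀ x ∈ I, Tendsto (fun n => ∫ s in (0:ℝ)..x, ∫ t in (0:ℝ)..s,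
      a t * Gn (φ n) (u (φ n) t)) atTop (nhds (∫ s in (0:ℝ)..x, ∫ t in (0:ℝ)..s, q t)) := by
    intro x hx
    apply intervalIntegral.tendsto_integral_filter_of_dominated_convergence (fun _ => 2 * K)
    · filter_upwards with n
      have hc := continuousOn_prim hT (hB (φ n)).2.1
      have : IntervalIntegrable (fun s => ∫ t in (0:ℝ)..s, a t * Gn (φ n) (u (φ n) t)) volume 0 x :=
        ContinuousOn.intervalIntegrable (by
          rw [uIcc_of_le hx.1]; exact hc.mono (Icc_subset_Icc le_rfl hx.2))
      exact (intervalIntegrable_iff.1 this).aestronglyMeasurable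
    · filter_upwards with n
      filter_upwards with t ht
      rw [uIoc_of_le hx.1] at ht
      have ht' : t ∈ I := ⟨ht.1.le, ht.2.trans hx.2⟩
      have h1 := (hB (φ n)).1.2.2 t ht'
      have h2 : ∫ t in (0:ℝ)..t, a t * Gn (φ n) (u (φ n) t) = u' (φ n) 0 - u' (φ n) t := by linarith
      rw [h2, Real.norm_eq_abs]
      refine (abs_sub _ _).trans ?_
      linarith [hd (φ n) 0 z0, hd (φ n) t ht']
    · exact intervalIntegrable_const
    · filter_upwards with t ht
      rw [uIoc_of_le hx.1] at ht
      exact hint t ⟨ht.1.le, ht.2.trans hx.2⟩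
  have hform : ∀ x ∈ I, w x = w 0 + v0 * x - ∫ s in (0:ℝ)..x, ∫ t in (0:ℝ)..s, q t := by
    intro x hx
    refine tendsto_nhds_unique (hpt x hx) ?_
    have := ((hpt 0 z0).add (hl2.mul_const x)).sub (hint2 x hx)
    refine this.congr fun n => ?_
    exact ((hB (φ n)).formula hx).symm
  refine ⟨w, _, ⟨isSol_of_integral hT hqi hform, hqi, ?_, ?_⟩, hwb, ?_⟩
  · have h0 : ∫ t in (0:ℝ)..T, q t = 0 := by
      refine tendsto_nhds_unique (hint T zT) ?_
      refine tendsto_const_nhds.congr fun n => ?_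
      exact ((hB (φ n)).int hT).symm
    simp only [h0]; simp
  · have hN : ∀ n, if N = true then u' n 0 = 0 else u n 0 = u n T := fun n => (hB n).2.2.2
    split_ifs with h
    · simp only [if_pos h] at hN
      simp only [intervalIntegral.integral_same, sub_zero]
      refine tendsto_nhds_unique hl2 ?_
      refine tendsto_const_nhds.congr fun n => (hN _).symm
    · simp only [if_neg h] at hN
      refine tendsto_nhds_unique (hpt 0 z0) ?_
      refine (hpt T zT).congr fun n => (hN _).symm
  · by_contra hc
    push Not at hc
    have h1 := (Metric.tendsto_nhds.1 hl1 r hr).exists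
    obtain ⟨n, hn⟩ := h1
    have h2 := BoundedContinuousFunction.dist_coe_le_dist (f := F (φ n)) (g := v)
      (⟨xr (φ n), hxr _⟩ : I)
    have h3 := hc _ (hxr (φ n))
    rw [hw, IccExtend_of_mem _ _ (hxr (φ n))] at h3
    rw [h3, hFv, dist_zero_right, Real.norm_eq_abs] at h2
    have := hxr2 (φ n)
    have := le_abs_self (u (φ n) (xr (φ n)))
    simp only at h2
    linarith

/-- inf-convolution (Lipschitz regularization) -/
noncomputable def gI (g : ℝ → ℝ) (n s : ℝ) : ℝ := ⨅ t : Ici (0:ℝ), (g t + n * |s - t|)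


lemma gI_bdd {g : ℝ → ℝ} (hg : ∀ s : ℝ, 0 ≤ s → 0 ≤ g s) {n : ℝ} (hn : 0 ≤ n) (s : ℝ) : BddBelow (range fun t : Ici (0:ℝ) => g t + n * |s - t|) := by
  refine ⟨0, ?_⟩
  rintro _ ⟨t, rfl⟩
  have := hg t t.2
  simp only
  positivity

lemma gI_le {g : ℝ → ℝ} (hg : ∀ s : ℝ, 0 ≤ s → 0 ≤ g s) {n : ℝ} (hn : 0 ≤ n) (s : ℝ) {t : ℝ} (ht : 0 ≤ t) : gI g n s ≤ g t + n * |s - t| :=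
  ciInf_le (gI_bdd hg hn s) (⟨t, ht⟩ : Ici (0:ℝ))

lemma gI_nonneg {g : ℝ → ℝ} (hg : ∀ s : ℝ, 0 ≤ s → 0 ≤ g s) {n : ℝ} (hn : 0 ≤ n) (s : ℝ) : 0 ≤ gI g n s := by
  haveI : Nonempty (Ici (0:ℝ)) := ⟨⟨0, mem_Ici.2 le_rfl⟩⟩
  apply le_ciInf
  intro t
  have := hg t t.2
  positivity

lemma gI_le_self {g : ℝ → ℝ} (hg : ∀ s : ℝ, 0 ≤ s → 0 ≤ g s) {n : ℝ} (hn : 0 ≤ n) {s : ℝ} (hs : 0 ≤ s) : gI g n s ≤ g s := by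
  have := gI_le hg hn s hs
  simpa using this

lemma gI_lip {g : ℝ → ℝ} (hg : ∀ s : ℝ, 0 ≤ s → 0 ≤ g s) {n : ℝ} (hn : 0 ≤ n) (s s' : ℝ) : |gI g n s - gI g n s'| ≤ n * |s - s'| := by
  haveI : Nonempty (Ici (0:ℝ)) := ⟨⟨0, mem_Ici.2 le_rfl⟩⟩
  have key : ∀ s s' : ℝ, gI g n s - n * |s - s'| ≤ gI g n s' := by
    intro s s'
    apply le_ciInf
    intro t
    have h1 := gI_le hg hn s t.2
    have h2 := abs_sub_le s s' t
    have := mul_le_mul_of_nonneg_left h2 hn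
    linarith
  rw [abs_le]
  have h1 := key s s'
  have h2 := key s' s
  rw [abs_sub_comm s' s] at h2
  constructor <;> linarith

lemma le_gI_of {g : ℝ → ℝ} {n : ℝ} {s c : ℝ} (h : ∀ t, 0 ≤ t → c ≤ g t + n * |s - t|) : c ≤ gI g n s := by
  haveI : Nonempty (Ici (0:ℝ)) := ⟨⟨0, mem_Ici.2 le_rfl⟩⟩
  exact le_ciInf fun t => h t t.2

lemma gI_conv {g : ℝ → ℝ} (hg : ∀ s : ℝ, 0 ≤ s → 0 ≤ g s) (hgc : ContinuousOn g (Ici 0))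
    {nn : ℕ → ℝ} (hn0 : ∀ k, 0 ≤ nn k) (hn : Tendsto nn atTop atTop) {sn : ℕ → ℝ} {s : ℝ}
    (hs0 : ∀ k, 0 ≤ sn k) (hs : Tendsto sn atTop (nhds s)) :
    Tendsto (fun k => gI g (nn k) (sn k)) atTop (nhds (g s)) := by
  have hsn : 0 ≤ s := ge_of_tendsto' hs hs0
  have hup : Tendsto (fun k => g (sn k)) atTop (nhds (g s)) := by
    have := hgc s hsn
    exact this.tendsto.comp (tendsto_nhdsWithin_iff.2 ⟨hs, Eventually.of_forall hs0⟩)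
  rw [Metric.tendsto_nhds] at hup ⊢
  intro ε hε
  have hc := Metric.continuousWithinAt_iff.1 (hgc s hsn) (ε / 2) (by positivity)
  obtain ⟨δ, hδ, hc⟩ := hc
  have e2 : ∀ᶠ k in atTop, g s ≤ nn k * (δ / 2) :=
    (hn.atTop_mul_const (by positivity : 0 < δ / 2)).eventually_ge_atTop _
  filter_upwards [hup ε hε, Metric.tendsto_nhds.1 hs (δ / 2) (by positivity), e2] with k h1 h2 h3
  have l1 := gI_le_self hg (hn0 k) (hs0 k)
  have l2 : g s - ε / 2 ≤ gI g (nn k) (sn k) := by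
    apply le_gI_of
    intro t ht
    have ht' : 0 ≤ nn k * |sn k - t| := mul_nonneg (hn0 k) (abs_nonneg _)
    rcases lt_or_ge (dist t s) δ with h | h
    · have := hc ht h
      rw [Real.dist_eq, abs_lt] at this
      linarith
    · have h4 : δ / 2 ≤ |sn k - t| := by
        have := dist_triangle t (sn k) s
        rw [dist_comm t (sn k), Real.dist_eq (sn k) t] at this
        linarith
      have := mul_le_mul_of_nonneg_left h4 (hn0 k)
      have := hg t ht
      linarith
  rw [Real.dist_eq, abs_lt] at h1 ⊢
  constructor <;> linarith

lemma lip_near_zero {g : ℝ → ℝ} (hg00 : g 0 = 0)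
    (hg0 : Tendsto (fun s => g s / s) (nhdsWithin 0 (Ioi 0)) (nhds 0))
    (hsmooth : ∃ ε₀ > (0:ℝ), ∃ g' : ℝ → ℝ,
      (∀ s ∈ Ico (0:ℝ) ε₀, HasDerivWithinAt g (g' s) (Ico (0:ℝ) ε₀) s) ∧
      ContinuousOn g' (Ico (0:ℝ) ε₀)) {γ : ℝ} (hγ : 0 < γ) :
    ∃ r > 0, ∀ s ∈ Icc 0 r, ∀ s' ∈ Icc 0 r, |g s - g s'| ≤ γ * |s - s'| := by
  obtain ⟨ε, hε, g', hd, hc⟩ := hsmooth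
  have h0 : (0:ℝ) ∈ Ico 0 ε := ⟨le_rfl, hε⟩
  have hg'0 : g' 0 = 0 := by
    have h1 := hd 0 h0
    rw [hasDerivWithinAt_iff_tendsto_slope] at h1
    have e : Ico 0 ε \ {0} = Ioo 0 ε := Ico_sdiff_left
    rw [e, nhdsWithin_Ioo_eq_nhdsGT hε] at h1
    refine tendsto_nhds_unique h1 (hg0.congr fun s => ?_)
    rw [slope_def_field, hg00, sub_zero, sub_zero]
  obtain ⟨δ, hδ, hcc⟩ := Metric.continuousWithinAt_iff.1 (hc 0 h0) γ hγ
  have hm : 0 < min δ ε := lt_min hδ hε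
  have hsub : Icc 0 (min δ ε / 2) ⊆ Ico 0 ε := fun x hx =>
    ⟨hx.1, by linarith [hx.2, min_le_right δ ε]⟩
  refine ⟨min δ ε / 2, by positivity, ?_⟩
  intro s hs s' hs'
  have := (convex_Icc (0:ℝ) (min δ ε / 2)).norm_image_sub_le_of_norm_hasDerivWithin_le
    (f := g) (f' := g') (C := γ) (fun x hx => (hd x (hsub hx)).mono hsub) (by
      intro x hx
      have h1 := hcc (hsub hx) (by
        rw [dist_zero_right, Real.norm_eq_abs, abs_of_nonneg hx.1]
        linarith [hx.2, min_le_left δ ε])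
      rw [hg'0, dist_zero_right] at h1
      exact h1.le) hs' hs
  simpa [Real.norm_eq_abs] using this

theorem main_exists (N : Bool)
    (T : ℝ) (hT : 0 < T)
    (g : ℝ → ℝ) (hg1 : CondG1 g)
    (hg0 : Tendsto (fun s => g s / s) (nhdsWithin 0 (Ioi 0)) (nhds 0))
    (hsmooth : ∃ ε₀ > (0:ℝ), ∃ g' : ℝ → ℝ,
      (∀ s ∈ Ico (0:ℝ) ε₀, HasDerivWithinAt g (g' s) (Ico (0:ℝ) ε₀) s) ∧
      ContinuousOn g' (Ico (0:ℝ) ε₀))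
    (a : ℝ → ℝ) (ha : IntervalIntegrable a volume 0 T)
    (m : ℕ) (hm : 0 < m) (σ τ : Fin m → ℝ)
    (hIT : ∀ i, 0 ≤ σ i ∧ σ i ≤ τ i ∧ τ i ≤ T)
    (hapos : ∀ i, ∀ᵐ x ∂(volume.restrict (Icc (σ i) (τ i))), 0 ≤ a x)
    (hane0 : ∀ i, ¬ (∀ᵐ x ∂(volume.restrict (Icc (σ i) (τ i))), a x = 0))
    (haneg : ∀ᵐ x ∂(volume.restrict (Icc (0:ℝ) T \ ⋃ i, Icc (σ i) (τ i))), a x ≤ 0)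
    (ha2 : (∫ x in (0:ℝ)..T, a x) < 0)
    (heig : ∀ i, ∃ lam : ℝ, 0 < lam ∧ (lam : EReal) < GrowthLiminf g ∧
      DirichletEigenpair a (σ i) (τ i) lam) :
    ∃ u u', BSol N T (fun t => a t * g (u t)) u u' ∧ ∀ x ∈ Icc 0 T, 0 < u x := by
  obtain ⟨hgc, hgn, hg00, hgp⟩ := hg1
  -- the slope at infinity
  choose lam hl0 hl1 hl2 using heig
  haveI : Nonempty (Fin m) := ⟨⟨0, hm⟩⟩
  obtain ⟨i0, hi0⟩ := Finite.exists_max lam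
  obtain ⟨l, hl, hlg⟩ := EReal.lt_iff_exists_real_btwn.1 (hl1 i0)
  have hl' : lam i0 < l := by exact_mod_cast hl
  have hlpos : 0 < l := (hl0 i0).trans hl'
  have hev : ∀ᶠ s : ℝ in atTop, (l : EReal) < ((g s / s : ℝ) : EReal) :=
    eventually_lt_of_lt_liminf hlg
  obtain ⟨S0, hS0⟩ := eventually_atTop.1 hev
  have hlin : ∀ s, 0 ≤ s → l * s - l * max S0 1 ≤ g s := by
    intro s hs
    have h1 : 0 < max S0 1 := by positivity
    rcases le_total (max S0 1) s with h | h
    · have h2 := hS0 s ((le_max_left _ _).trans h)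
      have h3 : l < g s / s := by exact_mod_cast h2
      rw [lt_div_iff₀ (by linarith)] at h3
      have := mul_pos hlpos h1
      linarith
    · have := hgn s hs
      have := mul_le_mul_of_nonneg_left h hlpos.le
      linarith
  set C := l * max S0 1 with hC
  -- a priori bound
  obtain ⟨R, hR0, hR⟩ := apriori_glob (N := N) hT ha hm hIT hapos hane0 haneg (lam' := l) (C := C)
    (fun i => ⟨lam i, (hi0 i).trans_lt hl', hl2 i⟩)
  -- small Lipschitz constant
  set A := ∫ t in (0:ℝ)..T, |a t| with hA
  have hA0 : 0 ≤ A := intervalIntegral.integral_nonneg hT.le fun t _ => abs_nonneg _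
  set γ := (-∫ t in (0:ℝ)..T, a t) / (T * A ^ 2 + 1) with hγdef
  have hD : 0 < -∫ t in (0:ℝ)..T, a t := by linarith
  have hγ : 0 < γ := by positivity
  have hsm : γ * T * A ^ 2 < - ∫ t in (0:ℝ)..T, a t := by
    have : γ * (T * A ^ 2 + 1) = - ∫ t in (0:ℝ)..T, a t := by
      rw [hγdef]; field_simp
    linarith
  obtain ⟨r2, hr2, hlip2⟩ := lip_near_zero hg00 hg0 hsmooth hγ
  set r := r2 / 2 with hr
  have hr0 : 0 < r := by positivity
  -- positivity of the integral of the positive part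
  have hap : 0 < ∫ x in (0:ℝ)..T, max (a x) 0 := by
    have hbi : IntervalIntegrable (fun t => max (a t) 0) volume 0 T := by
      have : (fun t => max (a t) 0) = fun t => (a t + |a t|) / 2 := by
        funext t
        rcases le_total 0 (a t) with h | h
        · simp [h, abs_of_nonneg h]
        · simp [h, abs_of_nonpos h]
      rw [this]
      exact (ha.add ha.abs).div_const 2
    have hnn : 0 ≤ᵐ[volume.restrict (Ioc 0 T)] fun t => max (a t) 0 :=
      Eventually.of_forall fun t => le_max_right _ _
    rw [intervalIntegral.integral_of_le hT.le]
    apply lt_of_le_of_ne (integral_nonneg_of_ae hnn)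
    intro h
    rw [eq_comm, integral_eq_zero_iff_of_nonneg_ae hnn
      ((intervalIntegrable_iff_integrableOn_Ioc_of_le hT.le).1 hbi)] at h
    apply hane0 i0
    rw [Measure.restrict_congr_set (Ioc_ae_eq_Icc (μ := volume))] at h
    have h' := ae_restrict_of_ae_restrict_of_subset (μ := volume)
      (Icc_subset_Icc (hIT i0).1 (hIT i0).2.2) h
    filter_upwards [h', hapos i0] with x h1 h2
    simp only [Pi.zero_apply] at h1
    rw [max_eq_left h2] at h1
    exact h1
  -- approximating nonlinearities
  obtain ⟨n0, hn0⟩ := exists_nat_ge (max l γ)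
  set nn : ℕ → ℝ := fun n => (n0 + n : ℝ) with hnn
  have hnl : ∀ n, l ≤ nn n := fun n => by
    have := (le_max_left l γ).trans hn0
    simp only [hnn]
    have : (0:ℝ) ≤ n := Nat.cast_nonneg n
    linarith
  have hnγ : ∀ n, γ ≤ nn n := fun n => by
    have := (le_max_right l γ).trans hn0
    simp only [hnn]
    have : (0:ℝ) ≤ n := Nat.cast_nonneg n
    linarith
  have hnp : ∀ n, 0 ≤ nn n := fun n => hlpos.le.trans (hnl n)
  set Gn : ℕ → ℝ → ℝ := fun n s => gI g (nn n) (max s 0) with hGn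
  have hGs : ∀ n s, 0 ≤ s → Gn n s = gI g (nn n) s := fun n s hs => by
    simp only [hGn]; rw [max_eq_left hs]
  have hGe : ∀ n, ∀ s ∈ Icc 0 r, Gn n s = g s := by
    intro n s hs
    rw [hGs n s hs.1]
    apply le_antisymm (gI_le_self hgn (hnp n) hs.1)
    apply le_gI_of
    intro t ht
    have hs2 : s ∈ Icc 0 r2 := ⟨hs.1, by linarith [hs.2]⟩
    rcases le_total t r2 with h | h
    · have h1 := hlip2 s hs2 t ⟨ht, h⟩
      have h2 := mul_le_mul_of_nonneg_right (hnγ n) (abs_nonneg (s - t))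
      have := le_abs_self (g s - g t)
      linarith
    · have h1 := hlip2 s hs2 0 ⟨le_rfl, hr2.le⟩
      rw [hg00, sub_zero, sub_zero, abs_of_nonneg hs.1] at h1
      have h3 := le_abs_self (g s)
      have h4 : s ≤ |s - t| := by
        have := neg_le_abs (s - t)
        linarith [hs.2]
      have h5 := mul_le_mul_of_nonneg_left h4 hγ.le
      have h6 := mul_le_mul_of_nonneg_right (hnγ n) (abs_nonneg (s - t))
      have := hgn t ht
      linarith
  have hGL : ∀ n s s', |Gn n s - Gn n s'| ≤ nn n * |s - s'| := by
    intro n s s'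
    refine (gI_lip hgn (hnp n) _ _).trans (mul_le_mul_of_nonneg_left ?_ (hnp n))
    exact abs_max_sub_max_le_abs s s' 0
  have hG0 : ∀ n s, 0 ≤ Gn n s := fun n s => gI_nonneg hgn (hnp n) _
  have hGz : ∀ n, ∀ s ≤ 0, Gn n s = 0 := by
    intro n s hs
    simp only [hGn]
    rw [max_eq_right hs]
    apply le_antisymm _ (gI_nonneg hgn (hnp n) _)
    rw [← hg00]
    simpa only [hg00] using gI_le_self hgn (hnp n) (le_refl (0:ℝ))
  have hGlin : ∀ n s, 0 ≤ s → l * s - C ≤ Gn n s := by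
    intro n s hs
    rw [hGs n s hs]
    apply le_gI_of
    intro t ht
    have h1 := hlin t ht
    have h2 := mul_le_mul_of_nonneg_right (hnl n) (abs_nonneg (s - t))
    have h3 := mul_le_mul_of_nonneg_left (le_abs_self (s - t)) hlpos.le
    linarith
  have hsol : ∀ n, ∃ u u', BSol N T (fun t => a t * Gn n (u t)) u u' ∧
      (∀ x ∈ Icc 0 T, 0 ≤ u x ∧ u x ≤ R) ∧ ∃ x ∈ Icc 0 T, r < u x := by
    intro n
    refine prop_A N hT ha ha2 hap (hnp n) (hGL n) (hG0 n) (hGz n) hr0 hγ.le ?_ hsm ?_ hR0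
      (hR (Gn n) (hG0 n) (hGz n) (hGlin n))
    · intro s hs s' hs'
      rw [hGe n s hs, hGe n s' hs']
      exact hlip2 s ⟨hs.1, by linarith [hs.2]⟩ s' ⟨hs'.1, by linarith [hs'.2]⟩
    · intro s h1 h2
      rw [hGe n s ⟨h1.le, h2⟩]
      exact hgp s h1
  -- bound for g on [0,R]
  obtain ⟨M, hM⟩ : ∃ M, ∀ s ∈ Icc 0 R, |g s| ≤ M := by
    obtain ⟨M, hM⟩ := isCompact_Icc.exists_bound_of_continuousOn
      (hgc.mono (show Icc (0:ℝ) R ⊆ Ici 0 from Icc_subset_Ici_self))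
    exact ⟨M, hM⟩
  have hM0 : 0 ≤ M := (abs_nonneg _).trans (hM 0 ⟨le_rfl, hR0.le⟩)
  obtain ⟨u, u', hB, hb, hne⟩ := limit_sol (N := N) hT ha hr0 hR0.le hM0 (Gn := Gn) (g := g) (R := R)
    (by
      intro n s h1 h2
      rw [abs_of_nonneg (hG0 n s), hGs n s h1]
      exact (gI_le_self hgn (hnp n) h1).trans ((le_abs_self _).trans (hM s ⟨h1, h2⟩))) hgc
    (by
      intro φ hφ sn s h1 h2
      have h3 : Tendsto (fun k => nn (φ k)) atTop atTop := by
        simp only [hnn]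
        exact tendsto_atTop_add_const_left _ _ (tendsto_natCast_atTop_atTop.comp hφ.tendsto_atTop)
      have := gI_conv hgn hgc (fun k => hnp (φ k)) h3 h1 h2
      exact this.congr fun k => (hGs _ _ (h1 k)).symm) hsol
  refine ⟨u, u', hB, hB.pos hT (k := fun t => |a t| * (γ + M / r)) (ha.abs.mul_const _)
    (fun t => by positivity) ?_ (fun x hx => (hb x hx).1) hne⟩
  intro x hx
  rw [abs_mul, mul_assoc]
  apply mul_le_mul_of_nonneg_left _ (abs_nonneg _)
  have hu := hb x hx
  rw [abs_of_nonneg hu.1]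
  rcases le_total (u x) r2 with h | h
  · have h1 := hlip2 (u x) ⟨hu.1, h⟩ 0 ⟨le_rfl, hr2.le⟩
    rw [hg00, sub_zero, sub_zero, abs_of_nonneg hu.1] at h1
    have : 0 ≤ M / r * u x := mul_nonneg (by positivity) hu.1
    linarith
  · have h1 := hM (u x) hu
    have h2 : M ≤ M / r * u x := by
      rw [div_mul_eq_mul_div, le_div_iff₀ hr0]
      exact mul_le_mul_of_nonneg_left (by linarith) hM0
    have : 0 ≤ γ * u x := mul_nonneg hγ.le hu.1
    linarith

/-- Theorem (main, smooth-near-zero case): under (g1), `g(s)/s → 0` as `s → 0⁺`,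
continuous differentiability of `g` on a right neighborhood `[0,ε₀)` of `0`,
(a1), (a2), and `g_∞ > λ₁ⁱ` for every interval of positivity `Iᵢ`, the equation
`u'' + a(x) g(u) = 0` has a positive Neumann solution and a positive periodic
solution. -/
theorem statement_2
    (T : ℝ) (hT : 0 < T)
    (g : ℝ → ℝ) (hg1 : CondG1 g)
    (hg0 : Tendsto (fun s => g s / s) (nhdsWithin 0 (Ioi 0)) (nhds 0))
    (hsmooth : ∃ ε₀ > (0:ℝ), ∃ g' : ℝ → ℝ,
      (∀ s ∈ Ico (0:ℝ) ε₀, HasDerivWithinAt g (g' s) (Ico (0:ℝ) ε₀) s) ∧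
      ContinuousOn g' (Ico (0:ℝ) ε₀))
    (a : ℝ → ℝ) (ha : IntervalIntegrable a volume 0 T)
    (m : ℕ) (hm : 0 < m) (σ τ : Fin m → ℝ)
    (hIT : ∀ i, 0 ≤ σ i ∧ σ i ≤ τ i ∧ τ i ≤ T)
    (hdisj : Pairwise fun i j => Disjoint (Icc (σ i) (τ i)) (Icc (σ j) (τ j)))
    (hapos : ∀ i, ∀ᵐ x ∂(volume.restrict (Icc (σ i) (τ i))), 0 ≤ a x)
    (hane0 : ∀ i, ¬ (∀ᵐ x ∂(volume.restrict (Icc (σ i) (τ i))), a x = 0))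
    (haneg : ∀ᵐ x ∂(volume.restrict (Icc (0:ℝ) T \ ⋃ i, Icc (σ i) (τ i))), a x ≤ 0)
    (ha2 : (∫ x in (0:ℝ)..T, a x) < 0)
    (heig : ∀ i, ∃ lam : ℝ, 0 < lam ∧ (lam : EReal) < GrowthLiminf g ∧
      DirichletEigenpair a (σ i) (τ i) lam) :
    PosSolNeumann T a g ∧ PosSolPeriodic T a g := by
  constructor
  · obtain ⟨u, u', hB, hp⟩ := main_exists true T hT g hg1 hg0 hsmooth a ha m hm σ τ
      hIT hapos hane0 haneg ha2 heig
    have h4 := hB.2.2.2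
    rw [if_pos rfl] at h4
    exact ⟨u, u', hB.1, hp, h4, by rw [← hB.2.2.1]; exact h4⟩
  · obtain ⟨u, u', hB, hp⟩ := main_exists false T hT g hg1 hg0 hsmooth a ha m hm σ τ
      hIT hapos hane0 haneg ha2 heig
    have h4 := hB.2.2.2
    rw [if_neg (by decide)] at h4
    exact ⟨u, u', hB.1, hp, h4, hB.2.2.1⟩
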